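/- arXiv:2309.10384 — 5 statements merged into one kernel-verified Lean document; each statement's English description precedes it below -/
import Mathlib

section
/- Let a ∈ C¹([0,∞)) satisfy: (1) a′(s) > 0 for s > 0; (2) for each t > 0 the function s ↦ (a′(t) − a′(s))/√(a(t) − a(s)) is monotonically decreasing on [0,t). Let v : [0,∞) → ℝ be C¹, and define (Rw)(t) = ∫_0^t (a′(s)/2) (a(t) − a(s))^{−1/2} w(s) ds for continuous w. Then for every t > 0, Rv is differentiable at t and |(Rv)′(t)| ≤ (a′(t)/2)(a(t) − a(0))^{−1/2} |v(t)| + (R|v′|)(t). -/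
open MeasureTheory intervalIntegral

/-- The Abel-type integral operator `(Rw)(t) = ∫_0^t (a'(s)/2) (a(t) - a(s))^{-1/2} w(s) ds`. -/
noncomputable def Rop (a a' : ℝ → ℝ) (w : ℝ → ℝ) (t : ℝ) : ℝ :=
  ∫ s in (0 : ℝ)..t, (a' s / 2) * (a t - a s) ^ (-(1 / 2) : ℝ) * w s

/-!
Integrating by parts removes the singularity of the kernel:
`(Rv)(t) = √(a t - a 0) v(0) + ∫_0^t √(a t - a s) v'(s) ds`. The square root, extended by zero to
the negative half-line, has difference quotients at `y` bounded by `|y|^{-1/2}`, and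
`s ↦ |a t - a s|^{-1/2}` is integrable because `a' t ≠ 0`; so dominated convergence allows one to
differentiate under the integral over a fixed interval around `t`. Substituting
`v(0) = v(t) - ∫_0^t v'` into the derivative leaves the integral of `v'` against
`(a' t / 2) ((a t - a s)^{-1/2} - (a t - a 0)^{-1/2})`, which the monotonicity hypothesis bounds by
the kernel of `R`.
-/

open Set Filter Topology

theorem rpow_neg_one_half_eq_inv_sqrt (x : ℝ) : x ^ (-(1 / 2) : ℝ) = (√x)⁻¹ := by
  rcases le_or_gt 0 x with hx | hx
  · rw [Real.rpow_neg hx, ← Real.sqrt_eq_rpow]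
  · have hcos : Real.cos (-(1 / 2) * Real.pi) = 0 := by
      rw [neg_mul, Real.cos_neg, one_div_mul_eq_div, Real.cos_pi_div_two]
    rw [Real.rpow_def_of_neg hx, hcos, mul_zero, Real.sqrt_eq_zero_of_nonpos hx.le, inv_zero]

theorem intervalIntegrable_abs_rpow {r : ℝ} (hr : -1 < r) (b c : ℝ) :
    IntervalIntegrable (fun x : ℝ => |x| ^ r) volume b c := by
  have h := (intervalIntegrable_cpow' (a := b) (b := c) (r := r) (by simpa using hr)).norm
  simpa only [Complex.norm_cpow_real, Complex.norm_real, Real.norm_eq_abs] using h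

theorem abs_sqrt_sub_sqrt_mul_sqrt_abs_le (x y : ℝ) : |√x - √y| * √|y| ≤ |x - y| := by
  rcases le_total 0 x with hx | hx <;> rcases le_total 0 y with hy | hy
  · calc |√x - √y| * √|y| ≤ |√x - √y| * |√x + √y| := by
          rw [abs_of_nonneg hy, abs_of_nonneg (by positivity : 0 ≤ √x + √y)]
          gcongr
          exact le_add_of_nonneg_left (Real.sqrt_nonneg x)
      _ = |x - y| := by
          rw [← abs_mul, mul_comm, ← sq_sub_sq, Real.sq_sqrt hx, Real.sq_sqrt hy]
  · rw [Real.sqrt_eq_zero_of_nonpos hy, sub_zero, abs_of_nonneg (Real.sqrt_nonneg x),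
      abs_of_nonpos hy, abs_of_nonneg (by linarith)]
    nlinarith [Real.sq_sqrt hx, Real.sq_sqrt (neg_nonneg.2 hy), two_mul_le_add_sq √x √(-y)]
  · rw [Real.sqrt_eq_zero_of_nonpos hx, zero_sub, abs_neg, abs_of_nonneg (Real.sqrt_nonneg y),
      abs_of_nonneg hy, Real.mul_self_sqrt hy, abs_of_nonpos (by linarith)]
    linarith
  · simp [Real.sqrt_eq_zero_of_nonpos hx, Real.sqrt_eq_zero_of_nonpos hy]

theorem exists_pos_mul_norm_sub_le_norm_sub {𝕜 E : Type*} [NontriviallyNormedField 𝕜]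
    [NormedAddCommGroup E] [NormedSpace 𝕜 E] {f : 𝕜 → E} {f' : E} {K : Set 𝕜} {x : 𝕜}
    (hK : IsCompact K) (hKx : K ∈ 𝓝 x) (hf : ContinuousOn f K) (hinj : InjOn f K)
    (hd : HasDerivAt f f' x) (hf' : f' ≠ 0) :
    ∃ c > 0, ∀ y ∈ K, c * ‖y - x‖ ≤ ‖f y - f x‖ := by
  -- The slope, completed by `f'` at `x`, is continuous and nowhere zero on `K`.
  have hcont : ContinuousOn (dslope f x) K :=
    (continuousOn_dslope hKx).2 ⟨hf, hd.differentiableAt⟩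
  have hxK : x ∈ K := mem_of_mem_nhds hKx
  obtain ⟨z, hzK, hz⟩ := hK.exists_isMinOn ⟨x, hxK⟩ hcont.norm
  have hz0 : dslope f x z ≠ 0 := by
    rcases eq_or_ne z x with rfl | hzx
    · rwa [dslope_same, hd.deriv]
    · intro h
      have h' := sub_smul_dslope f x z
      rw [h, smul_zero] at h'
      exact hzx (hinj hzK hxK (sub_eq_zero.1 h'.symm))
  refine ⟨‖dslope f x z‖, norm_pos_iff.2 hz0, fun y hy => ?_⟩
  rw [← sub_smul_dslope, norm_smul, mul_comm]
  gcongr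
  exact hz hy

theorem hasDerivAt_integral_of_dominated_slope {𝕜 E α : Type*} [NontriviallyNormedField 𝕜]
    [NormedAddCommGroup E] [NormedSpace ℝ E] [NormedSpace 𝕜 E] [SMulCommClass ℝ 𝕜 E]
    {m : MeasurableSpace α} {μ : Measure α} {F : 𝕜 → α → E} {F' : α → E} {bound : α → ℝ} {x₀ : 𝕜}
    (hF_int : ∀ᶠ x in 𝓝 x₀, Integrable (F x) μ)
    (h_bound : ∀ᶠ x in 𝓝 x₀, ∀ᵐ s ∂μ, ‖F x s - F x₀ s‖ ≤ bound s * ‖x - x₀‖)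
    (bound_integrable : Integrable bound μ)
    (h_diff : ∀ᵐ s ∂μ, HasDerivAt (F · s) (F' s) x₀) :
    HasDerivAt (fun x => ∫ s, F x s ∂μ) (∫ s, F' s ∂μ) x₀ := by
  have hint₀ : Integrable (F x₀) μ := hF_int.self_of_nhds
  have hint : ∀ᶠ x in 𝓝[≠] x₀, Integrable (F x) μ := nhdsWithin_le_nhds hF_int
  have hlim : Tendsto (fun x => ∫ s, slope (F · s) x₀ x ∂μ) (𝓝[≠] x₀) (𝓝 (∫ s, F' s ∂μ)) := by
    refine tendsto_integral_filter_of_dominated_convergence bound ?_ ?_ bound_integrable ?_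
    · filter_upwards [hint] with x hx
      exact ((hx.sub hint₀).smul (x - x₀)⁻¹).aestronglyMeasurable
    · filter_upwards [nhdsWithin_le_nhds h_bound, self_mem_nhdsWithin] with x hx hne
      filter_upwards [hx] with s hs
      have hpos : 0 < ‖x - x₀‖ := norm_pos_iff.2 (sub_ne_zero.2 hne)
      rwa [slope_def_module, norm_smul, norm_inv, inv_mul_le_iff₀ hpos, mul_comm]
    · filter_upwards [h_diff] with s hs using hasDerivAt_iff_tendsto_slope.1 hs
  refine hasDerivAt_iff_tendsto_slope.2 (hlim.congr' ?_)
  filter_upwards [hint] with x hx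
  simp only [slope_def_module]
  rw [MeasureTheory.integral_smul, MeasureTheory.integral_sub hx hint₀]

theorem const_mul_add_integral_mul_deriv_eq {b t κ : ℝ} {k v v' : ℝ → ℝ} (hbt : b ≤ t)
    (hv : ∀ s ∈ Icc b t, HasDerivWithinAt v (v' s) (Icc b t) s)
    (hv' : IntervalIntegrable v' volume b t)
    (hkv' : IntervalIntegrable (fun s => k s * v' s) volume b t) :
    κ * v b + ∫ s in b..t, k s * v' s = κ * v t + ∫ s in b..t, (k s - κ) * v' s := by
  have hftc : ∫ s in b..t, v' s = v t - v b :=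
    integral_eq_sub_of_hasDerivAt_of_le hbt (fun s hs => (hv s hs).continuousWithinAt)
      (fun s hs => (hv s (Ioo_subset_Icc_self hs)).hasDerivAt (Icc_mem_nhds hs.1 hs.2)) hv'
  simp only [sub_mul]
  rw [intervalIntegral.integral_sub hkv' (hv'.const_mul κ),
    intervalIntegral.integral_const_mul, hftc]
  ring

section SqrtKernel

variable {a a' v v' w : ℝ → ℝ} {α b c t : ℝ}

theorem intervalIntegrable_inv_sqrt_abs_image_sub (hac : ContinuousOn a (Icc b c))
    (hinj : InjOn a (Icc b c)) (ht : t ∈ Ioo b c) (hα : α ≠ 0) (ha : HasDerivAt a α t) :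
    IntervalIntegrable (fun s => (√|a t - a s|)⁻¹) volume b c := by
  have hbc : b ≤ c := (ht.1.trans ht.2).le
  obtain ⟨k, hk, hle⟩ := exists_pos_mul_norm_sub_le_norm_sub isCompact_Icc
    (Icc_mem_nhds ht.1 ht.2) hac hinj ha hα
  have hmodel : IntervalIntegrable (fun s => (√|s - t|)⁻¹) volume b c := by
    simpa only [rpow_neg_one_half_eq_inv_sqrt, sub_add_cancel] using
      (intervalIntegrable_abs_rpow (r := -(1 / 2)) (by norm_num) (b - t) (c - t)).comp_sub_right t
  refine (hmodel.const_mul (√k)⁻¹).mono_fun' ?_ ?_ <;> rw [uIoc_of_le hbc]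
  · have hcont : ContinuousOn (fun s => √|a t - a s|) (Ioc b c) :=
      ((continuousOn_const.sub (hac.mono Ioc_subset_Icc_self)).abs).sqrt
    exact (hcont.aemeasurable measurableSet_Ioc).inv.aestronglyMeasurable
  · filter_upwards [ae_restrict_of_ae (Measure.ae_ne volume t),
      ae_restrict_mem measurableSet_Ioc] with s hst hs
    have : 0 < |s - t| := abs_pos.2 (sub_ne_zero.2 hst)
    rw [Real.norm_of_nonneg (by positivity), ← mul_inv, ← Real.sqrt_mul hk.le, abs_sub_comm (a t)]
    gcongr
    exact hle s (Ioc_subset_Icc_self hs)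

theorem hasDerivAt_integral_sqrt_image_sub (hac : ContinuousOn a (Icc b c))
    (hinj : InjOn a (Icc b c)) (hw : ContinuousOn w (Icc b c)) (ht : t ∈ Ioo b c) (hα : α ≠ 0)
    (ha : HasDerivAt a α t) :
    HasDerivAt (fun τ => ∫ s in b..c, √(a τ - a s) * w s)
      (∫ s in b..c, α / (2 * √(a t - a s)) * w s) t := by
  have hbc : b ≤ c := (ht.1.trans ht.2).le
  obtain ⟨K, hK⟩ := ha.isBigO_sub.bound
  have hbound : IntervalIntegrable (fun s => (√|a t - a s|)⁻¹ * (K * |w s|)) volume b c :=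
    (intervalIntegrable_inv_sqrt_abs_image_sub hac hinj ht hα ha).mul_continuousOn
      (by rw [uIcc_of_le hbc]; exact continuousOn_const.mul hw.abs)
  have hne : ∀ᵐ s ∂volume.restrict (Ioc b c), a t - a s ≠ 0 := by
    filter_upwards [ae_restrict_of_ae (Measure.ae_ne volume t),
      ae_restrict_mem measurableSet_Ioc] with s hst hs h
    exact hst (hinj (Ioc_subset_Icc_self hs) (Ioo_subset_Icc_self ht) (sub_eq_zero.1 h).symm)
  simp only [integral_of_le hbc]
  refine hasDerivAt_integral_of_dominated_slope (Eventually.of_forall fun τ => ?_) ?_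
    ((intervalIntegrable_iff_integrableOn_Ioc_of_le hbc).1 hbound) ?_
  · exact (((continuousOn_const.sub hac).sqrt.mul hw).integrableOn_Icc).mono_set
      Ioc_subset_Icc_self
  · filter_upwards [hK] with τ hτ
    filter_upwards [hne] with s hs
    have hsqrt : 0 < √|a t - a s| := Real.sqrt_pos.2 (abs_pos.2 hs)
    have hslope : |√(a τ - a s) - √(a t - a s)| ≤ (√|a t - a s|)⁻¹ * |a τ - a t| := by
      rw [le_inv_mul_iff₀' hsqrt, ← sub_sub_sub_cancel_right (a τ) (a t) (a s)]
      exact abs_sqrt_sub_sqrt_mul_sqrt_abs_le _ _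
    calc ‖√(a τ - a s) * w s - √(a t - a s) * w s‖
        = |√(a τ - a s) - √(a t - a s)| * |w s| := by
          rw [← sub_mul, Real.norm_eq_abs, abs_mul]
      _ ≤ (√|a t - a s|)⁻¹ * (K * ‖τ - t‖) * |w s| := by
          gcongr
          exact hslope.trans (by gcongr; exact hτ)
      _ = (√|a t - a s|)⁻¹ * (K * |w s|) * ‖τ - t‖ := by ring
  · filter_upwards [hne] with s hs
    exact ((ha.sub_const (a s)).sqrt hs).mul_const (w s)

theorem intervalIntegrable_div_sqrt_image_sub (hac : ContinuousOn a (Icc b c))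
    (hmono : StrictMonoOn a (Icc b c)) (ht : t ∈ Ioo b c) (hα : α ≠ 0) (ha : HasDerivAt a α t) :
    IntervalIntegrable (fun s => α / (2 * √(a t - a s))) volume b t := by
  have habs : IntervalIntegrable (fun s => (√|a t - a s|)⁻¹) volume b t :=
    (intervalIntegrable_inv_sqrt_abs_image_sub hac hmono.injOn ht hα ha).mono_set
      (uIcc_subset_uIcc_left (Icc_subset_uIcc (Ioo_subset_Icc_self ht)))
  refine (habs.const_mul (α / 2)).congr fun s hs => ?_
  rw [uIoc_of_le ht.1.le] at hs
  have hle : a s ≤ a t :=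
    hmono.monotoneOn ⟨hs.1.le, hs.2.trans ht.2.le⟩ (Ioo_subset_Icc_self ht) hs.2
  simp only [abs_of_nonneg (sub_nonneg.2 hle), ← div_eq_mul_inv, div_div]

theorem integral_comp_image_sub_mul_eq_of_strictMonoOn {g : ℝ → ℝ} (hg : ∀ x < 0, g x = 0)
    (hmono : StrictMonoOn a (Icc b c)) (ht : t ∈ Icc b c) :
    ∫ s in b..c, g (a t - a s) * w s = ∫ s in b..t, g (a t - a s) * w s := by
  rw [integral_of_le (ht.1.trans ht.2), integral_of_le ht.1]
  refine setIntegral_eq_of_subset_of_forall_sdiff_eq_zero measurableSet_Ioc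
    (Ioc_subset_Ioc_right ht.2) fun s hs => ?_
  have hts : t < s := not_le.1 fun h => hs.2 ⟨hs.1.1, h⟩
  rw [hg _ (sub_neg.2 (hmono ht (Ioc_subset_Icc_self hs.1) hts)), zero_mul]

theorem hasDerivAt_integral_sqrt_image_sub_of_strictMonoOn (hac : ContinuousOn a (Icc b c))
    (hmono : StrictMonoOn a (Icc b c)) (hw : ContinuousOn w (Icc b c)) (ht : t ∈ Ioo b c)
    (hα : α ≠ 0) (ha : HasDerivAt a α t) :
    HasDerivAt (fun τ => ∫ s in b..τ, √(a τ - a s) * w s)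
      (∫ s in b..t, α / (2 * √(a t - a s)) * w s) t := by
  have hsqrt : ∀ x < 0, √x = 0 := fun x hx => Real.sqrt_eq_zero_of_nonpos hx.le
  have hfixed := hasDerivAt_integral_sqrt_image_sub hac hmono.injOn hw ht hα ha
  rw [integral_comp_image_sub_mul_eq_of_strictMonoOn (g := fun x => α / (2 * √x))
    (fun x hx => by rw [hsqrt x hx, mul_zero, div_zero]) hmono (Ioo_subset_Icc_self ht)] at hfixed
  refine hfixed.congr_of_eventuallyEq ?_
  filter_upwards [Icc_mem_nhds ht.1 ht.2] with τ hτ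
  exact (integral_comp_image_sub_mul_eq_of_strictMonoOn hsqrt hmono hτ).symm

theorem hasDerivAt_sqrt_sub_image (hmono : StrictMonoOn a (Icc b t))
    (ha : ∀ s ∈ Ioo b t, HasDerivAt a (a' s) s) {s : ℝ} (hs : s ∈ Ioo b t) :
    HasDerivAt (fun s => √(a t - a s)) (-(a' s / (2 * √(a t - a s)))) s := by
  have hlt : a s < a t :=
    hmono (Ioo_subset_Icc_self hs) (right_mem_Icc.2 (hs.1.trans hs.2).le) hs.2
  simpa only [neg_div] using ((ha s hs).const_sub (a t)).sqrt (sub_pos.2 hlt).ne'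

theorem intervalIntegrable_deriv_div_sqrt (hbt : b ≤ t) (hac : ContinuousOn a (Icc b t))
    (hmono : StrictMonoOn a (Icc b t)) (ha : ∀ s ∈ Ioo b t, HasDerivAt a (a' s) s) :
    IntervalIntegrable (fun s => a' s / (2 * √(a t - a s))) volume b t := by
  refine intervalIntegrable_deriv_of_nonneg (g := fun s => -√(a t - a s)) ?_ ?_ ?_
  · rw [uIcc_of_le hbt]
    exact (continuousOn_const.sub hac).sqrt.neg
  · rw [min_eq_left hbt, max_eq_right hbt]
    intro s hs
    simpa only [neg_neg] using (hasDerivAt_sqrt_sub_image hmono ha hs).fun_neg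
  · rw [min_eq_left hbt, max_eq_right hbt]
    intro s hs
    have hacc : AccPt s (𝓟 (Ioo b t)) := (isOpen_Ioo.uniqueDiffWithinAt (𝕜 := ℝ) hs).accPt
    have hderiv : 0 ≤ a' s := (ha s hs).hasDerivWithinAt.nonneg_of_monotoneOn hacc
      (hmono.monotoneOn.mono Ioo_subset_Icc_self)
    positivity

theorem integral_deriv_div_sqrt_mul_eq (hbt : b ≤ t) (hac : ContinuousOn a (Icc b t))
    (hmono : StrictMonoOn a (Icc b t)) (ha : ∀ s ∈ Ioo b t, HasDerivAt a (a' s) s)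
    (hvc : ContinuousOn v (Icc b t)) (hv : ∀ s ∈ Ioo b t, HasDerivAt v (v' s) s)
    (hv' : IntervalIntegrable v' volume b t) :
    ∫ s in b..t, a' s / (2 * √(a t - a s)) * v s =
      √(a t - a b) * v b + ∫ s in b..t, √(a t - a s) * v' s := by
  have hparts := integral_mul_deriv_eq_deriv_mul_of_hasDerivAt (u := fun s => √(a t - a s))
    (u' := fun s => -(a' s / (2 * √(a t - a s)))) (v := v) (v' := v') (a := b) (b := t)
    (by rw [uIcc_of_le hbt]; exact (continuousOn_const.sub hac).sqrt)
    (by rwa [uIcc_of_le hbt])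
    (by
      rw [min_eq_left hbt, max_eq_right hbt]
      exact fun s hs => hasDerivAt_sqrt_sub_image hmono ha hs)
    (by rwa [min_eq_left hbt, max_eq_right hbt])
    (intervalIntegrable_deriv_div_sqrt hbt hac hmono ha).neg hv'
  simp only [neg_mul, intervalIntegral.integral_neg, sub_self, Real.sqrt_zero, zero_mul]
    at hparts
  linarith

theorem abs_div_sqrt_sub_div_sqrt_le {s : ℝ} (hb : 0 ≤ a' b) (ht : 0 ≤ a' t) (hbs : a b ≤ a s)
    (hst : a s < a t)
    (hle : (a' t - a' s) / √(a t - a s) ≤ (a' t - a' b) / √(a t - a b)) :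
    |a' t / (2 * √(a t - a s)) - a' t / (2 * √(a t - a b))| ≤ a' s / (2 * √(a t - a s)) := by
  have : 0 < √(a t - a s) := Real.sqrt_pos.2 (sub_pos.2 hst)
  have hanti : a' t / (2 * √(a t - a b)) ≤ a' t / (2 * √(a t - a s)) := by gcongr
  have hnonneg : 0 ≤ a' b / √(a t - a b) := by positivity
  rw [abs_of_nonneg (sub_nonneg.2 hanti)]
  simp only [sub_div] at hle
  simp only [mul_comm (2 : ℝ), ← div_div]
  linarith

end SqrtKernel

section AbelOperator

variable {a a' v v' : ℝ → ℝ} {t : ℝ}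

theorem Rop_eq_integral_div_sqrt (a a' w : ℝ → ℝ) (t : ℝ) :
    Rop a a' w t = ∫ s in (0 : ℝ)..t, a' s / (2 * √(a t - a s)) * w s := by
  simp only [Rop, rpow_neg_one_half_eq_inv_sqrt, ← div_eq_mul_inv, div_div]

theorem Rop_eq_sqrt_mul_add_integral
    (ha : ∀ s ∈ Ici (0 : ℝ), HasDerivWithinAt a (a' s) (Ici 0) s) (hmono : StrictMonoOn a (Ici 0))
    (hv : ∀ s ∈ Ici (0 : ℝ), HasDerivWithinAt v (v' s) (Ici 0) s)
    (hv' : ContinuousOn v' (Ici 0)) (ht : 0 ≤ t) :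
    Rop a a' v t = √(a t - a 0) * v 0 + ∫ s in (0 : ℝ)..t, √(a t - a s) * v' s := by
  have hsub : Icc 0 t ⊆ Ici 0 := Icc_subset_Ici_self
  rw [Rop_eq_integral_div_sqrt]
  exact integral_deriv_div_sqrt_mul_eq ht (fun s hs => (ha s hs.1).continuousWithinAt.mono hsub)
    (hmono.mono hsub) (fun s hs => (ha s hs.1.le).hasDerivAt (Ici_mem_nhds hs.1))
    (fun s hs => (hv s hs.1).continuousWithinAt.mono hsub)
    (fun s hs => (hv s hs.1.le).hasDerivAt (Ici_mem_nhds hs.1))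
    ((hv'.mono hsub).intervalIntegrable_of_Icc ht)

theorem hasDerivAt_Rop (ha : ∀ s ∈ Ici (0 : ℝ), HasDerivWithinAt a (a' s) (Ici 0) s)
    (hmono : StrictMonoOn a (Ici 0))
    (hv : ∀ s ∈ Ici (0 : ℝ), HasDerivWithinAt v (v' s) (Ici 0) s)
    (hv' : ContinuousOn v' (Ici 0)) (ht : 0 < t) (hat : a' t ≠ 0) :
    HasDerivAt (Rop a a' v) (a' t / (2 * √(a t - a 0)) * v t + ∫ s in (0 : ℝ)..t,
      (a' t / (2 * √(a t - a s)) - a' t / (2 * √(a t - a 0))) * v' s) t := by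
  have hsub (c : ℝ) : Icc 0 c ⊆ Ici 0 := Icc_subset_Ici_self
  have hac : ContinuousOn a (Icc 0 (t + 1)) := fun s hs =>
    (ha s hs.1).continuousWithinAt.mono (hsub _)
  have hmono' : StrictMonoOn a (Icc 0 (t + 1)) := hmono.mono (hsub _)
  have hv't : ContinuousOn v' (Icc 0 t) := hv'.mono (hsub _)
  have htI : t ∈ Ioo 0 (t + 1) := ⟨ht, lt_add_one t⟩
  have hderiv : HasDerivAt a (a' t) t := (ha t ht.le).hasDerivAt (Ici_mem_nhds ht)
  have hsqrt : HasDerivAt (fun τ => √(a τ - a 0)) (a' t / (2 * √(a t - a 0))) t :=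
    (hderiv.sub_const (a 0)).sqrt (sub_pos.2 (hmono self_mem_Ici ht.le ht)).ne'
  have hintegral : HasDerivAt (fun τ => ∫ s in (0 : ℝ)..τ, √(a τ - a s) * v' s)
      (∫ s in (0 : ℝ)..t, a' t / (2 * √(a t - a s)) * v' s) t :=
    hasDerivAt_integral_sqrt_image_sub_of_strictMonoOn hac hmono' (hv'.mono (hsub _)) htI hat hderiv
  have hint : IntervalIntegrable (fun s => a' t / (2 * √(a t - a s)) * v' s) volume 0 t :=
    (intervalIntegrable_div_sqrt_image_sub hac hmono' htI hat hderiv).mul_continuousOn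
      (by rwa [uIcc_of_le ht.le])
  rw [← const_mul_add_integral_mul_deriv_eq ht.le
    (fun s hs => (hv s hs.1).mono (hsub _)) (hv't.intervalIntegrable_of_Icc ht.le) hint]
  refine ((hsqrt.mul_const (v 0)).add hintegral).congr_of_eventuallyEq ?_
  filter_upwards [Ici_mem_nhds ht] with τ hτ
  exact Rop_eq_sqrt_mul_add_integral ha hmono hv hv' hτ

theorem abel_operator_derivative_bound_general
    (ha : ∀ s ∈ Ici (0 : ℝ), HasDerivWithinAt a (a' s) (Ici 0) s) (hmono : StrictMonoOn a (Ici 0))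
    (hv : ∀ s ∈ Ici (0 : ℝ), HasDerivWithinAt v (v' s) (Ici 0) s)
    (hv' : ContinuousOn v' (Ici 0)) (ht : 0 < t) (hat : 0 < a' t)
    (hmax : IsMaxOn (fun s => (a' t - a' s) / √(a t - a s)) (Ico 0 t) 0) :
    DifferentiableAt ℝ (Rop a a' v) t ∧
      |deriv (Rop a a' v) t| ≤
        a' t / 2 * (a t - a 0) ^ (-(1 / 2) : ℝ) * |v t| + Rop a a' (fun s => |v' s|) t := by
  have hderiv := hasDerivAt_Rop ha hmono hv hv' ht hat.ne'
  have hsub : Icc 0 t ⊆ Ici 0 := Icc_subset_Ici_self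
  have ha0 : 0 ≤ a' 0 := (ha 0 self_mem_Ici).nonneg_of_monotoneOn
    (uniqueDiffWithinAt_Ici 0).accPt hmono.monotoneOn
  have hint : IntervalIntegrable (fun s => a' s / (2 * √(a t - a s)) * |v' s|) volume 0 t :=
    (intervalIntegrable_deriv_div_sqrt ht.le
      (fun s hs => (ha s hs.1).continuousWithinAt.mono hsub) (hmono.mono hsub)
      (fun s hs => (ha s hs.1.le).hasDerivAt (Ici_mem_nhds hs.1))).mul_continuousOn
      (by rw [uIcc_of_le ht.le]; exact (hv'.mono hsub).abs)
  refine ⟨hderiv.differentiableAt, ?_⟩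
  rw [hderiv.deriv, Rop_eq_integral_div_sqrt, rpow_neg_one_half_eq_inv_sqrt, ← div_eq_mul_inv,
    div_div]
  refine (abs_add_le _ _).trans (add_le_add ?_ ?_)
  · rw [abs_mul, abs_of_nonneg (by positivity : 0 ≤ a' t / (2 * √(a t - a 0)))]
  · rw [← Real.norm_eq_abs]
    refine norm_integral_le_of_norm_le ht.le ?_ hint
    filter_upwards [Measure.ae_ne volume t] with s hst hs
    rw [norm_mul, Real.norm_eq_abs, Real.norm_eq_abs]
    have hlt : s < t := hs.2.lt_of_ne hst
    gcongr
    exact abs_div_sqrt_sub_div_sqrt_le ha0 hat.le (hmono.monotoneOn self_mem_Ici hs.1.le hs.1.le)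
      (hmono hs.1.le ht.le hlt) (hmax ⟨hs.1.le, hlt⟩)

end AbelOperator

theorem abel_operator_derivative_bound (a a' : ℝ → ℝ)
    (ha : ∀ s ∈ Set.Ici (0 : ℝ), HasDerivAt a (a' s) s)
    (ha' : ContinuousOn a' (Set.Ici 0))
    (hapos : ∀ s : ℝ, 0 < s → 0 < a' s)
    (hmono : ∀ t : ℝ, 0 < t →
      AntitoneOn (fun s => (a' t - a' s) / Real.sqrt (a t - a s)) (Set.Ico 0 t))
    (v v' : ℝ → ℝ)
    (hv : ∀ s ∈ Set.Ici (0 : ℝ), HasDerivAt v (v' s) s)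
    (hv' : ContinuousOn v' (Set.Ici 0))
    (t : ℝ) (ht : 0 < t) :
    DifferentiableAt ℝ (Rop a a' v) t ∧
      |deriv (Rop a a' v) t| ≤
        (a' t / 2) * (a t - a 0) ^ (-(1 / 2) : ℝ) * |v t|
          + Rop a a' (fun s => |v' s|) t := by
  have hstrict : StrictMonoOn a (Ici 0) := strictMonoOn_of_hasDerivWithinAt_pos (convex_Ici 0)
    (fun s hs => (ha s hs).continuousAt.continuousWithinAt)
    (fun s hs => (ha s (interior_subset hs)).hasDerivWithinAt)
    (fun s hs => hapos s (by rwa [interior_Ici] at hs))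
  exact abel_operator_derivative_bound_general (fun s hs => (ha s hs).hasDerivWithinAt) hstrict
    (fun s hs => (hv s hs).hasDerivWithinAt) hv' ht (hapos t ht)
    fun s hs => hmono t ht (left_mem_Ico.2 ht) hs hs.1
end

section
/- Let a ∈ C¹(ℝ) be an even function with a′(s) > 0 for s > 0 and such that for each t > 0 the function s ↦ (a′(t) − a′(s))/√(a(t) − a(s)) is monotonically decreasing on [0,t). Let f : [0,∞) → ℝ be continuous, and set W̃(t,r,f) = ∫_0^t ∫_{|r−s|}^{r+s} |f(λ)| a′(s) ((a(t) − a(s))(a(r+λ) − a(s))(a(s) − a(r−λ)))^{−1/2} dλ ds. Then: if 0 < t ≤ r, W̃(t,r,f) ≤ π ∫_{r−t}^{r+t} |f(λ)| (a(r+λ) − a(t))^{−1/2} dλ; and if t > r > 0, W̃(t,r,f) ≤ π ∫_0^{t+r} |f(λ)| |a(r+λ) − a(t)|^{−1/2} dλ. -/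
open MeasureTheory intervalIntegral

/-- The kernel `W̃(t,r,f)` arising from the Duhamel integral, with `|f|` in place of `f`. -/
noncomputable def Wtil (a a' : ℝ → ℝ) (t r : ℝ) (f : ℝ → ℝ) : ℝ :=
  ∫ s in (0 : ℝ)..t, ∫ l in |r - s|..(r + s),
    |f l| * a' s *
      ((a t - a s) * (a (r + l) - a s) * (a s - a (r - l))) ^ (-(1 / 2) : ℝ)

/-!
Interchange the order of integration. The region `0 < s < t`, `|r - s| < λ < r + s` says that
`r, s, λ` are the sides of a triangle, so for fixed `λ` the variable `s` runs from `x = |r - λ|`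
to `y = min t (r + λ)`. With `p = a t` and `q = a (r + λ)`, the inequality
`|q - p| * (min p q - a s) ≤ (p - a s) * (q - a s)` lets the factor `|a (r + λ) - a t| ^ (-1/2)` be
taken out of the inner integral, and what remains is the arcsine integral
`∫ a' s / √((a y - a s) * (a s - a x)) ds` over `(x, y)`, whose value is `π`.
-/

open Set

section RealInequalities

variable {p q w x : ℝ}

lemma abs_sub_mul_min_sub_le (hp : w ≤ p) (hq : w ≤ q) :
    |q - p| * (min p q - w) ≤ (p - w) * (q - w) := by
  rcases le_total p q with h | h
  · rw [abs_of_nonneg (sub_nonneg.2 h), min_eq_left h]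
    nlinarith
  · rw [abs_of_nonpos (sub_nonpos.2 h), min_eq_right h]
    nlinarith

lemma rpow_mul_mul_sub_le {z : ℝ} (hz : z ≤ 0) (hxw : x < w) (hp : w < p) (hq : w < q)
    (hpq : q ≠ p) :
    ((p - w) * (q - w) * (w - x)) ^ z ≤ |q - p| ^ z * ((min p q - w) * (w - x)) ^ z := by
  have hmin : 0 < min p q - w := sub_pos.2 (lt_min hp hq)
  have habs : 0 < |q - p| := abs_pos.2 (sub_ne_zero.2 hpq)
  have hwx : 0 < w - x := sub_pos.2 hxw
  rw [← Real.mul_rpow habs.le (by positivity), ← mul_assoc]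
  refine Real.rpow_le_rpow_of_nonpos (by positivity) ?_ hz
  exact mul_le_mul_of_nonneg_right (abs_sub_mul_min_sub_le hp.le hq.le) hwx.le

end RealInequalities

section Arcsine

lemma lintegral_ofReal_deriv_of_nonneg {G g : ℝ → ℝ} {x y : ℝ} (hxy : x ≤ y)
    (hG : ContinuousOn G (Icc x y)) (hG' : ∀ s ∈ Ioo x y, HasDerivAt G (g s) s)
    (hg : ∀ s ∈ Ioo x y, 0 ≤ g s) :
    ∫⁻ s in Ioo x y, ENNReal.ofReal (g s) = ENNReal.ofReal (G y - G x) := by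
  have hinteg : IntegrableOn g (Ioc x y) := integrableOn_deriv_of_nonneg hG hG' hg
  rw [← ofReal_integral_eq_lintegral_ofReal (hinteg.mono_set Ioo_subset_Ioc_self)
    (ae_restrict_of_forall_mem measurableSet_Ioo hg), ← integral_Ioc_eq_integral_Ioo,
    ← integral_of_le hxy, integral_eq_sub_of_hasDerivAt_of_le hxy hG hG'
      ((intervalIntegrable_iff_integrableOn_Ioc_of_le hxy).2 hinteg)]

lemma hasDerivAt_arcsin_affine {A B w : ℝ} (hA : A < w) (hB : w < B) :
    HasDerivAt (fun v => Real.arcsin ((2 * v - A - B) / (B - A)))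
      (((B - w) * (w - A)) ^ (-(1 / 2) : ℝ)) w := by
  have hAB : 0 < B - A := by linarith
  have hBw : 0 < B - w := sub_pos.2 hB
  have hwA : 0 < w - A := sub_pos.2 hA
  have haffine : HasDerivAt (fun v => (2 * v - A - B) / (B - A)) (2 / (B - A)) w := by
    simpa using ((((hasDerivAt_id w).const_mul 2).sub_const A).sub_const B).div_const (B - A)
  have hne_neg_one : (2 * w - A - B) / (B - A) ≠ -1 := by
    rw [Ne, div_eq_iff hAB.ne']
    intro h
    linarith
  have hne_one : (2 * w - A - B) / (B - A) ≠ 1 := by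
    rw [Ne, div_eq_iff hAB.ne']
    intro h
    linarith
  have hsq : 1 - ((2 * w - A - B) / (B - A)) ^ 2 = (2 / (B - A)) ^ 2 * ((B - w) * (w - A)) := by
    field_simp
    ring
  refine ((Real.hasDerivAt_arcsin hne_neg_one hne_one).comp w haffine).congr_deriv ?_
  rw [hsq, Real.sqrt_mul (by positivity), Real.sqrt_sq (by positivity),
    Real.rpow_neg (by positivity), ← Real.sqrt_eq_rpow]
  field_simp

lemma lintegral_deriv_mul_rpow_neg_half {u u' : ℝ → ℝ} {x y : ℝ} (hxy : x < y)
    (hu : ContinuousOn u (Icc x y)) (hu' : ∀ s ∈ Ioo x y, HasDerivAt u (u' s) s)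
    (hnonneg : ∀ s ∈ Ioo x y, 0 ≤ u' s) (hmem : ∀ s ∈ Ioo x y, u s ∈ Ioo (u x) (u y)) :
    ∫⁻ s in Ioo x y, ENNReal.ofReal (u' s * ((u y - u s) * (u s - u x)) ^ (-(1 / 2) : ℝ)) =
      ENNReal.ofReal Real.pi := by
  set G : ℝ → ℝ := fun s => Real.arcsin ((2 * u s - u x - u y) / (u y - u x))
  set g : ℝ → ℝ := fun s => u' s * ((u y - u s) * (u s - u x)) ^ (-(1 / 2) : ℝ)
  have hlt : 0 < u y - u x := by
    obtain ⟨s, hs⟩ := nonempty_Ioo.2 hxy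
    exact sub_pos.2 ((hmem s hs).1.trans (hmem s hs).2)
  have hGcont : ContinuousOn G (Icc x y) := Real.continuous_arcsin.comp_continuousOn (by fun_prop)
  have hGderiv : ∀ s ∈ Ioo x y, HasDerivAt G (g s) s := fun s hs =>
    ((hasDerivAt_arcsin_affine (hmem s hs).1 (hmem s hs).2).comp s (hu' s hs)).congr_deriv
      (mul_comm _ _)
  have hg_nonneg : ∀ s ∈ Ioo x y, 0 ≤ g s := fun s hs =>
    mul_nonneg (hnonneg s hs) (Real.rpow_nonneg
      (mul_nonneg (sub_pos.2 (hmem s hs).2).le (sub_pos.2 (hmem s hs).1).le) _)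
  have hGy : G y = Real.pi / 2 := by
    rw [← Real.arcsin_one]
    refine congrArg Real.arcsin ?_
    field_simp
    ring
  have hGx : G x = -(Real.pi / 2) := by
    rw [← Real.arcsin_neg_one]
    refine congrArg Real.arcsin ?_
    field_simp
    ring
  rw [lintegral_ofReal_deriv_of_nonneg hxy.le hGcont hGderiv hg_nonneg, hGy, hGx, sub_neg_eq_add,
    add_halves]

end Arcsine

section Integrability

lemma intervalIntegrable_abs_sub_rpow {z : ℝ} (hz : -1 < z) (c u v : ℝ) :
    IntervalIntegrable (fun x => |x - c| ^ z) volume u v := by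
  have hcentred : IntervalIntegrable (fun x : ℝ => |x| ^ z) volume (u - c) (v - c) := by
    refine intervalIntegrable_of_even (fun x => by rw [abs_neg]) fun x hx => ?_
    refine (intervalIntegrable_rpow' hz).congr fun s hs => ?_
    rw [uIoc_of_le hx.le] at hs
    simp only [abs_of_pos hs.1]
  simpa using hcentred.comp_sub_right c

lemma exists_pos_mul_abs_sub_le_abs_sub {g : ℝ → ℝ} {K : Set ℝ} {c : ℝ} (hK : IsCompact K)
    (hg : Continuous g) (hc : DifferentiableAt ℝ g c) (hc' : deriv g c ≠ 0)
    (hne : ∀ x ∈ K, x ≠ c → g x ≠ g c) :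
    ∃ m, 0 < m ∧ ∀ x ∈ K, m * |x - c| ≤ |g x - g c| := by
  have hcont : Continuous (dslope g c) :=
    continuousOn_univ.1 ((continuousOn_dslope Filter.univ_mem).2 ⟨hg.continuousOn, hc⟩)
  have hpos : ∀ x ∈ K, 0 < |dslope g c x| := fun x hx => by
    rcases eq_or_ne x c with rfl | hxc
    · simpa using hc'
    · rw [dslope_of_ne _ hxc, slope_def_field]
      exact abs_pos.2 (div_ne_zero (sub_ne_zero.2 (hne x hx hxc)) (sub_ne_zero.2 hxc))
  obtain ⟨m, hm, hle⟩ := hK.exists_forall_le' hcont.abs.continuousOn hpos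
  refine ⟨m, hm, fun x hx => ?_⟩
  calc m * |x - c| ≤ |dslope g c x| * |x - c| := by gcongr; exact hle x hx
    _ = |g x - g c| := by rw [← sub_smul_dslope g c x, smul_eq_mul, abs_mul, mul_comm]

lemma intervalIntegrable_abs_sub_apply_rpow {g : ℝ → ℝ} {c u v z : ℝ} (hg : Continuous g)
    (hc : DifferentiableAt ℝ g c) (hc' : deriv g c ≠ 0)
    (hne : ∀ x ∈ uIcc u v, x ≠ c → g x ≠ g c) (hz : -1 < z) (hz0 : z ≤ 0) :
    IntervalIntegrable (fun x => |g x - g c| ^ z) volume u v := by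
  obtain ⟨m, hm, hle⟩ := exists_pos_mul_abs_sub_le_abs_sub isCompact_uIcc hg hc hc' hne
  have hmeas : Measurable fun x => |g x - g c| ^ z := by fun_prop
  refine ((intervalIntegrable_abs_sub_rpow hz c u v).const_mul (m ^ z)).mono_fun'
    hmeas.aestronglyMeasurable ?_
  filter_upwards [ae_restrict_mem measurableSet_uIoc, Measure.ae_ne _ c] with x hx hxc
  rw [Real.norm_of_nonneg (by positivity), ← Real.mul_rpow hm.le (abs_nonneg _)]
  exact Real.rpow_le_rpow_of_nonpos (mul_pos hm (abs_pos.2 (sub_ne_zero.2 hxc)))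
    (hle x (uIoc_subset_uIcc hx)) hz0

end Integrability

section RegionIntegrals

variable {α β : Type*} [MeasurableSpace α] [MeasurableSpace β] {μ : Measure α} {ν : Measure β}

open Classical in
lemma setLIntegral_setLIntegral_eq_lintegral_lintegral_ite {S : Set α} {A : α → Set β}
    (hS : MeasurableSet S) (hA : ∀ x, MeasurableSet (A x)) (F : α → β → ENNReal) :
    ∫⁻ x in S, ∫⁻ y in A x, F x y ∂ν ∂μ =
      ∫⁻ x, ∫⁻ y, if x ∈ S ∧ y ∈ A x then F x y else 0 ∂ν ∂μ := by
  rw [← lintegral_indicator hS]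
  refine lintegral_congr fun x => ?_
  by_cases hx : x ∈ S
  · simp only [hx, indicator_of_mem, true_and, ← lintegral_indicator (hA x), indicator_apply]
  · simp only [hx, not_false_eq_true, indicator_of_notMem, false_and, if_false, lintegral_zero]

lemma setLIntegral_setLIntegral_swap [SFinite μ] [SFinite ν] {S : Set α} {T : Set β}
    {A : α → Set β} {B : β → Set α} (hS : MeasurableSet S) (hT : MeasurableSet T)
    (hA : ∀ x, MeasurableSet (A x)) (hB : ∀ y, MeasurableSet (B y))
    (hAB : ∀ x y, x ∈ S ∧ y ∈ A x ↔ y ∈ T ∧ x ∈ B y)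
    (hD : MeasurableSet {p : α × β | p.1 ∈ S ∧ p.2 ∈ A p.1}) {F : α → β → ENNReal}
    (hF : AEMeasurable (Function.uncurry F)
      ((μ.prod ν).restrict {p : α × β | p.1 ∈ S ∧ p.2 ∈ A p.1})) :
    ∫⁻ x in S, ∫⁻ y in A x, F x y ∂ν ∂μ = ∫⁻ y in T, ∫⁻ x in B y, F x y ∂μ ∂ν := by
  classical
  rw [setLIntegral_setLIntegral_eq_lintegral_lintegral_ite hS hA,
    setLIntegral_setLIntegral_eq_lintegral_lintegral_ite hT hB fun y x => F x y]
  simp only [← hAB]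
  refine lintegral_lintegral_swap (((aemeasurable_indicator_iff hD).2 hF).congr ?_)
  exact Filter.Eventually.of_forall fun p => by
    simp only [indicator_apply, mem_ofPred_eq, Function.uncurry_def]

lemma mem_Ioo_and_mem_Ioo_abs_sub_iff {r s t l : ℝ} :
    s ∈ Ioo 0 t ∧ l ∈ Ioo |r - s| (r + s) ↔
      l ∈ Ioo (max 0 (r - t)) (r + t) ∧ s ∈ Ioo |r - l| (min t (r + l)) := by
  simp only [mem_Ioo, max_lt_iff, lt_min_iff, abs_lt]
  constructor
  · rintro ⟨⟨_, _⟩, ⟨_, _⟩, _⟩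
    refine ⟨⟨⟨?_, ?_⟩, ?_⟩, ⟨?_, ?_⟩, ?_, ?_⟩ <;> linarith
  · rintro ⟨⟨⟨_, _⟩, _⟩, ⟨_, _⟩, _, _⟩
    refine ⟨⟨?_, ?_⟩, ⟨?_, ?_⟩, ?_⟩ <;> linarith

lemma measurableSet_triangle (r t : ℝ) :
    MeasurableSet {p : ℝ × ℝ | p.1 ∈ Ioo 0 t ∧ p.2 ∈ Ioo |r - p.1| (r + p.1)} := by
  simp only [mem_Ioo]
  measurability

lemma setLIntegral_triangle_swap {t r : ℝ} {F : ℝ → ℝ → ENNReal}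
    (hF : AEMeasurable (Function.uncurry F)
      ((volume.restrict (Ioi 0)).prod (volume.restrict (Ioi 0)))) :
    ∫⁻ s in Ioo 0 t, ∫⁻ l in Ioo |r - s| (r + s), F s l =
      ∫⁻ l in Ioo (max 0 (r - t)) (r + t), ∫⁻ s in Ioo |r - l| (min t (r + l)), F s l := by
  refine setLIntegral_setLIntegral_swap measurableSet_Ioo measurableSet_Ioo
    (fun _ => measurableSet_Ioo) (fun _ => measurableSet_Ioo)
    (fun s l => mem_Ioo_and_mem_Ioo_abs_sub_iff) (measurableSet_triangle r t) ?_
  rw [Measure.prod_restrict] at hF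
  refine hF.mono_set ?_
  rintro p ⟨hs, hl⟩
  exact ⟨hs.1, (abs_nonneg _).trans_lt hl.1⟩

end RegionIntegrals

/-- The factor of `|f λ|` in the integrand of `W̃(t,r,f)`, as a function of `s` and `λ = l`. With
the conventions of `Real.rpow`, its power is `0` where the base is not positive. -/
noncomputable def duhamelKernel (a a' : ℝ → ℝ) (t r s l : ℝ) : ℝ :=
  a' s * ((a t - a s) * (a (r + l) - a s) * (a s - a (r - l))) ^ (-(1 / 2) : ℝ)

section Kernel

variable {a a' f : ℝ → ℝ} {t r : ℝ}

lemma Wtil_eq_integral_duhamelKernel (a a' f : ℝ → ℝ) (t r : ℝ) :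
    Wtil a a' t r f =
      ∫ s in (0 : ℝ)..t, ∫ l in |r - s|..(r + s), |f l| * duhamelKernel a a' t r s l := by
  simp only [Wtil, duhamelKernel, mul_assoc]

lemma strictMonoOn_Ici_of_hasDerivAt_pos (hac : ContinuousOn a (Ici 0))
    (ha : ∀ s, 0 < s → HasDerivAt a (a' s) s) (hapos : ∀ s, 0 < s → 0 < a' s) :
    StrictMonoOn a (Ici 0) :=
  strictMonoOn_of_hasDerivWithinAt_pos (convex_Ici 0) hac
    (fun s hs => (ha s (interior_Ici.subset hs)).hasDerivWithinAt)
    (fun s hs => hapos s (interior_Ici.subset hs))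

lemma aemeasurable_duhamelKernel (hac : Continuous a)
    (ha : ∀ s, 0 < s → HasDerivAt a (a' s) s) (t r : ℝ) :
    AEMeasurable (fun p : ℝ × ℝ => duhamelKernel a a' t r p.1 p.2)
      ((volume.restrict (Ioi 0)).prod (volume.restrict (Ioi 0))) := by
  have ha' : AEMeasurable a' (volume.restrict (Ioi 0)) :=
    (measurable_deriv a).aemeasurable.congr
      (ae_restrict_of_forall_mem measurableSet_Ioi fun s hs => (ha s hs).deriv)
  have hpow : Measurable fun p : ℝ × ℝ =>
      ((a t - a p.1) * (a (r + p.2) - a p.1) * (a p.1 - a (r - p.2))) ^ (-(1 / 2) : ℝ) := by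
    fun_prop
  exact ha'.comp_fst.mul hpow.aemeasurable

lemma abs_duhamelKernel_le (heven : ∀ s, a (-s) = a s) (hmono : StrictMonoOn a (Ici 0))
    {s l : ℝ} (hs : s ∈ Ioo |r - l| (min t (r + l))) (hs' : 0 ≤ a' s) (hne : a (r + l) ≠ a t) :
    |duhamelKernel a a' t r s l| ≤ |a (r + l) - a t| ^ (-(1 / 2) : ℝ) *
      (a' s * ((a (min t (r + l)) - a s) * (a s - a |r - l|)) ^ (-(1 / 2) : ℝ)) := by
  have hs0 : 0 < s := (abs_nonneg _).trans_lt hs.1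
  obtain ⟨hst, hsl⟩ := lt_min_iff.1 hs.2
  have hxs : a |r - l| < a s := hmono (mem_Ici.2 (abs_nonneg _)) hs0.le hs.1
  have hsp : a s < a t := hmono hs0.le (hs0.trans hst).le hst
  have hsq : a s < a (r + l) := hmono hs0.le (hs0.trans hsl).le hsl
  have habs : a (r - l) = a |r - l| := by
    rcases abs_choice (r - l) with h | h <;> rw [h]
    exact (heven _).symm
  have hbase : 0 < (a t - a s) * (a (r + l) - a s) * (a s - a |r - l|) :=
    mul_pos (mul_pos (sub_pos.2 hsp) (sub_pos.2 hsq)) (sub_pos.2 hxs)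
  rw [duhamelKernel, habs, abs_of_nonneg (mul_nonneg hs' (Real.rpow_nonneg hbase.le _)),
    mul_left_comm, hmono.monotoneOn.map_min (hs0.trans hst).le (hs0.trans hsl).le]
  exact mul_le_mul_of_nonneg_left (rpow_mul_mul_sub_le (by norm_num) hxs hsp hsq hne) hs'

lemma lintegral_enorm_duhamelKernel_le (heven : ∀ s, a (-s) = a s) (hac : Continuous a)
    (ha : ∀ s, 0 < s → HasDerivAt a (a' s) s) (hapos : ∀ s, 0 < s → 0 < a' s)
    {l : ℝ} (hne : a (r + l) ≠ a t) :
    ∫⁻ s in Ioo |r - l| (min t (r + l)), ‖duhamelKernel a a' t r s l‖ₑ ≤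
      ENNReal.ofReal (|a (r + l) - a t| ^ (-(1 / 2) : ℝ) * Real.pi) := by
  rcases le_or_gt (min t (r + l)) |r - l| with hempty | hxy
  · simp [Ioo_eq_empty_of_le hempty]
  have hmono := strictMonoOn_Ici_of_hasDerivAt_pos hac.continuousOn ha hapos
  have hpos : ∀ s ∈ Ioo |r - l| (min t (r + l)), 0 < s := fun s hs =>
    (abs_nonneg _).trans_lt hs.1
  have hweight : 0 ≤ |a (r + l) - a t| ^ (-(1 / 2) : ℝ) := by positivity
  calc ∫⁻ s in Ioo |r - l| (min t (r + l)), ‖duhamelKernel a a' t r s l‖ₑ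
      ≤ ∫⁻ s in Ioo |r - l| (min t (r + l)), ENNReal.ofReal (|a (r + l) - a t| ^ (-(1 / 2) : ℝ)) *
          ENNReal.ofReal
            (a' s * ((a (min t (r + l)) - a s) * (a s - a |r - l|)) ^ (-(1 / 2) : ℝ)) := by
        refine setLIntegral_mono' measurableSet_Ioo fun s hs => ?_
        rw [Real.enorm_eq_ofReal_abs, ← ENNReal.ofReal_mul hweight]
        exact ENNReal.ofReal_le_ofReal
          (abs_duhamelKernel_le heven hmono hs (hapos s (hpos s hs)).le hne)
    _ = ENNReal.ofReal (|a (r + l) - a t| ^ (-(1 / 2) : ℝ) * Real.pi) := by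
        rw [lintegral_const_mul' _ _ ENNReal.ofReal_ne_top, ENNReal.ofReal_mul hweight,
          lintegral_deriv_mul_rpow_neg_half hxy hac.continuousOn
            (fun s hs => ha s (hpos s hs)) (fun s hs => (hapos s (hpos s hs)).le) fun s hs =>
              ⟨hmono (mem_Ici.2 (abs_nonneg _)) (hpos s hs).le hs.1,
                hmono (hpos s hs).le ((abs_nonneg _).trans hxy.le) hs.2⟩]

lemma ofReal_integral_integral_le_lintegral_lintegral (F : ℝ → ℝ → ℝ) (ht : 0 ≤ t)
    (hr : 0 ≤ r) :
    ENNReal.ofReal (∫ s in (0 : ℝ)..t, ∫ l in |r - s|..(r + s), F s l) ≤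
      ∫⁻ s in Ioo 0 t, ∫⁻ l in Ioo |r - s| (r + s), ‖F s l‖ₑ := by
  refine (Real.ofReal_le_enorm _).trans ?_
  rw [integral_of_le ht, integral_Ioc_eq_integral_Ioo]
  refine (enorm_integral_le_lintegral_enorm _).trans
    (setLIntegral_mono' measurableSet_Ioo fun s hs => ?_)
  rw [integral_of_le (abs_le.2 ⟨by linarith [hs.1], by linarith [hs.1]⟩),
    integral_Ioc_eq_integral_Ioo]
  exact enorm_integral_le_lintegral_enorm _

lemma ofReal_Wtil_le_lintegral (heven : ∀ s, a (-s) = a s) (hac : Continuous a)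
    (ha : ∀ s, 0 < s → HasDerivAt a (a' s) s) (hapos : ∀ s, 0 < s → 0 < a' s)
    (hf : AEMeasurable f (volume.restrict (Ioi 0))) (ht : 0 ≤ t) (hr : 0 ≤ r) :
    ENNReal.ofReal (Wtil a a' t r f) ≤ ∫⁻ l in Ioo (max 0 (r - t)) (r + t),
      ENNReal.ofReal (Real.pi * (|f l| * |a (r + l) - a t| ^ (-(1 / 2) : ℝ))) := by
  have hmono := strictMonoOn_Ici_of_hasDerivAt_pos hac.continuousOn ha hapos
  have hmeas : AEMeasurable (Function.uncurry fun s l => ‖|f l| * duhamelKernel a a' t r s l‖ₑ)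
      ((volume.restrict (Ioi 0)).prod (volume.restrict (Ioi 0))) :=
    (hf.abs.comp_snd.mul (aemeasurable_duhamelKernel hac ha t r)).enorm
  rw [Wtil_eq_integral_duhamelKernel]
  refine (ofReal_integral_integral_le_lintegral_lintegral _ ht hr).trans ?_
  refine (setLIntegral_triangle_swap hmeas).trans_le (lintegral_mono_ae ?_)
  filter_upwards [ae_restrict_mem measurableSet_Ioo, Measure.ae_ne _ (t - r)] with l hl hlne
  have hl0 : 0 < l := (le_max_left _ _).trans_lt hl.1
  have hne : a (r + l) ≠ a t := fun h =>
    hlne (eq_sub_of_add_eq' (hmono.injOn (add_nonneg hr hl0.le) ht h))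
  simp only [enorm_mul]
  rw [lintegral_const_mul' _ _ enorm_ne_top, mul_left_comm, mul_comm Real.pi,
    ENNReal.ofReal_mul (abs_nonneg _), Real.enorm_eq_ofReal (abs_nonneg _)]
  gcongr
  exact lintegral_enorm_duhamelKernel_le heven hac ha hapos hne

lemma intervalIntegrable_abs_mul_abs_sub_rpow (hac : Continuous a)
    (ha : ∀ s, 0 < s → HasDerivAt a (a' s) s) (hapos : ∀ s, 0 < s → 0 < a' s)
    (hf : AEMeasurable f (volume.restrict (Ioi 0)))
    (hfb : ∀ R, BddAbove ((fun l => |f l|) '' Icc 0 R)) (ht : 0 < t) (hr : 0 ≤ r)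
    {u v : ℝ} (hu : 0 ≤ u) (huv : u ≤ v) :
    IntervalIntegrable (fun l => |f l| * |a (r + l) - a t| ^ (-(1 / 2) : ℝ)) volume u v := by
  have hmono := strictMonoOn_Ici_of_hasDerivAt_pos hac.continuousOn ha hapos
  have hne : ∀ x ∈ uIcc (r + u) (r + v), x ≠ t → a x ≠ a t := fun x hx hxt h => by
    rw [uIcc_of_le (by gcongr)] at hx
    exact hxt (hmono.injOn ((add_nonneg hr hu).trans hx.1) ht.le h)
  have hweight : IntervalIntegrable (fun l => |a (r + l) - a t| ^ (-(1 / 2) : ℝ)) volume u v := by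
    simpa using (intervalIntegrable_abs_sub_apply_rpow hac (ha t ht).differentiableAt
      ((ha t ht).deriv.trans_ne (hapos t ht).ne') hne (z := -(1 / 2)) (by norm_num)
      (by norm_num)).comp_add_left r
  obtain ⟨C, hC⟩ := hfb v
  rw [intervalIntegrable_iff_integrableOn_Ioc_of_le huv] at hweight ⊢
  refine hweight.bdd_mul (c := C)
    (hf.mono_set (Ioc_subset_Ioi_self.trans (Ioi_subset_Ioi hu))).abs.aestronglyMeasurable
    (ae_restrict_of_forall_mem measurableSet_Ioc fun l hl => ?_)
  rw [Real.norm_eq_abs, abs_abs]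
  exact hC (mem_image_of_mem _ ⟨hu.trans hl.1.le, hl.2⟩)

lemma Wtil_le_pi_mul_integral (heven : ∀ s, a (-s) = a s) (hac : Continuous a)
    (ha : ∀ s, 0 < s → HasDerivAt a (a' s) s) (hapos : ∀ s, 0 < s → 0 < a' s)
    (hf : AEMeasurable f (volume.restrict (Ioi 0)))
    (hfb : ∀ R, BddAbove ((fun l => |f l|) '' Icc 0 R)) (ht : 0 < t) (hr : 0 ≤ r) :
    Wtil a a' t r f ≤ Real.pi *
      ∫ l in (max 0 (r - t))..(r + t), |f l| * |a (r + l) - a t| ^ (-(1 / 2) : ℝ) := by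
  have hle : max 0 (r - t) ≤ r + t := max_le (by linarith) (by linarith)
  have hinteg := (intervalIntegrable_abs_mul_abs_sub_rpow hac ha hapos hf hfb ht hr
    (le_max_left 0 (r - t)) hle).const_mul Real.pi
  have hnonneg : ∀ l, 0 ≤ Real.pi * (|f l| * |a (r + l) - a t| ^ (-(1 / 2) : ℝ)) := fun l => by
    positivity
  rw [← intervalIntegral.integral_const_mul, ← ENNReal.ofReal_le_ofReal_iff
    (intervalIntegral.integral_nonneg hle fun l _ => hnonneg l), integral_of_le hle,
    ofReal_integral_eq_lintegral_ofReal hinteg.1 (Filter.Eventually.of_forall hnonneg),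
    ← setLIntegral_congr Ioo_ae_eq_Ioc]
  exact ofReal_Wtil_le_lintegral heven hac ha hapos hf ht.le hr

theorem duhamel_kernel_bound_general (heven : ∀ s, a (-s) = a s) (hac : Continuous a)
    (ha : ∀ s, 0 < s → HasDerivAt a (a' s) s) (hapos : ∀ s, 0 < s → 0 < a' s)
    (hf : AEMeasurable f (volume.restrict (Ioi 0)))
    (hfb : ∀ R, BddAbove ((fun l => |f l|) '' Icc 0 R)) (t r : ℝ) :
    (0 < t → t ≤ r →
      Wtil a a' t r f ≤
        Real.pi * ∫ l in (r - t)..(r + t), |f l| * (a (r + l) - a t) ^ (-(1 / 2) : ℝ)) ∧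
    (0 < r → r < t →
      Wtil a a' t r f ≤
        Real.pi * ∫ l in (0 : ℝ)..(t + r), |f l| * |a (r + l) - a t| ^ (-(1 / 2) : ℝ)) := by
  have hmono := (strictMonoOn_Ici_of_hasDerivAt_pos hac.continuousOn ha hapos).monotoneOn
  refine ⟨fun ht htr => ?_, fun hr hrt => ?_⟩
  · have hbound := Wtil_le_pi_mul_integral heven hac ha hapos hf hfb ht (ht.le.trans htr)
    rw [max_eq_right (sub_nonneg.2 htr)] at hbound
    refine hbound.trans_eq (congrArg _ (integral_congr fun l hl => ?_))
    rw [uIcc_of_le (by linarith)] at hl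
    have hle : a t ≤ a (r + l) := by
      refine hmono ht.le (mem_Ici.2 ?_) ?_ <;> linarith [hl.1]
    simp only [abs_of_nonneg (sub_nonneg.2 hle)]
  · have hbound := Wtil_le_pi_mul_integral heven hac ha hapos hf hfb (hr.trans hrt) hr.le
    rwa [max_eq_left (by linarith), add_comm r t] at hbound

end Kernel

theorem duhamel_kernel_bound (a a' : ℝ → ℝ)
    (heven : ∀ s : ℝ, a (-s) = a s)
    (ha : ∀ s : ℝ, HasDerivAt a (a' s) s)
    (ha' : Continuous a')
    (hapos : ∀ s : ℝ, 0 < s → 0 < a' s)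
    (hmono : ∀ t : ℝ, 0 < t →
      AntitoneOn (fun s => (a' t - a' s) / Real.sqrt (a t - a s)) (Set.Ico 0 t))
    (f : ℝ → ℝ) (hf : ContinuousOn f (Set.Ici 0)) (t r : ℝ) :
    (0 < t → t ≤ r →
      Wtil a a' t r f ≤
        Real.pi * ∫ l in (r - t)..(r + t), |f l| * (a (r + l) - a t) ^ (-(1 / 2) : ℝ)) ∧
    (0 < r → r < t →
      Wtil a a' t r f ≤
        Real.pi * ∫ l in (0 : ℝ)..(t + r), |f l| * |a (r + l) - a t| ^ (-(1 / 2) : ℝ)) :=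
  duhamel_kernel_bound_general heven (continuous_iff_continuousAt.2 fun s => (ha s).continuousAt)
    (fun s _ => ha s) hapos ((hf.mono Ioi_subset_Ici_self).aemeasurable measurableSet_Ioi)
    (fun _ => isCompact_Icc.bddAbove_image (hf.abs.mono Icc_subset_Ici_self)) t r
end

section
/- Let k > 0. There exists a constant N_k > 0 such that for all r, t > 0: ∫_{|r−t|}^{r+t} (cosh λ)^{−k−1/2} sinh λ · ((cosh(r+t) − cosh λ)(cosh λ − cosh(r−t)))^{−1/2} dλ ≤ π N_k (cosh(t+r))^{−1/2} (cosh(t−r))^{−k}. -/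
open MeasureTheory intervalIntegral

/-!
Substituting `u = cosh l` turns the left-hand side into the integral over `[a, b]` of
`u ^ (-s) * (u - a) ^ (p - 1) * (b - u) ^ (q - 1)`, where `a = cosh (r - t)`, `b = cosh (r + t)`,
`p = q = 1 / 2` and `s = k + 1 / 2`. The Möbius map `x ↦ a * b / D` with `D = a * x + b * (1 - x)`
carries `[0, 1]` onto `[a, b]` and produces a Beta integrand times `D ^ (s - p - q)`. Since
`b * (1 - x) ≤ D ≤ b`, that power is at most `b ^ (s - p - q) * (1 - x) ^ min (s - p - q) 0`, so
what remains is a Beta integral, which converges because `k > 0`.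
-/

open Real Set ProbabilityTheory

section BetaIntegral

variable {p q : ℝ}

lemma ofReal_rpow_mul_one_sub_rpow (p q : ℝ) {x : ℝ} (hx : x ∈ Icc (0 : ℝ) 1) :
    ((x ^ (p - 1) * (1 - x) ^ (q - 1) : ℝ) : ℂ) =
      (x : ℂ) ^ ((p : ℂ) - 1) * (1 - (x : ℂ)) ^ ((q : ℂ) - 1) := by
  rw [Complex.ofReal_mul, Complex.ofReal_cpow hx.1, Complex.ofReal_cpow (sub_nonneg.2 hx.2)]
  push_cast
  rfl

lemma intervalIntegrable_rpow_mul_one_sub_rpow (hp : 0 < p) (hq : 0 < q) :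
    IntervalIntegrable (fun x : ℝ => x ^ (p - 1) * (1 - x) ^ (q - 1)) volume 0 1 := by
  have hcomplex := Complex.betaIntegral_convergent (u := p) (v := q) (by simpa) (by simpa)
  rw [intervalIntegrable_iff_integrableOn_Icc_of_le zero_le_one] at hcomplex ⊢
  refine IntegrableOn.congr_fun hcomplex.re (fun x hx => ?_) measurableSet_Icc
  rw [← ofReal_rpow_mul_one_sub_rpow p q hx]
  exact Complex.ofReal_re _

lemma integral_rpow_mul_one_sub_rpow (hp : 0 < p) (hq : 0 < q) :
    ∫ x in (0 : ℝ)..1, x ^ (p - 1) * (1 - x) ^ (q - 1) = beta p q := by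
  have hcomplex : ((∫ x in (0 : ℝ)..1, x ^ (p - 1) * (1 - x) ^ (q - 1) : ℝ) : ℂ) =
      Complex.betaIntegral p q := by
    rw [← intervalIntegral.integral_ofReal]
    refine integral_congr fun x hx => ofReal_rpow_mul_one_sub_rpow p q ?_
    rwa [uIcc_of_le zero_le_one] at hx
  rw [beta_eq_betaIntegralReal p q hp hq, ← hcomplex, Complex.ofReal_re]

end BetaIntegral

/-- The harmonic mean of `a` and `b` with weights `1 - x` and `x`, with denominators cleared; for
`0 < a < b` it is the Möbius substitution that maps `[0, 1]` increasingly onto `[a, b]`. -/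
noncomputable def weightedHarmonicMean (a b x : ℝ) : ℝ :=
  a * b / (a * x + b * (1 - x))

section WeightedHarmonicMean

variable {a b x : ℝ}

lemma weightedHarmonicMean_zero (hb : b ≠ 0) : weightedHarmonicMean a b 0 = a := by
  simp [weightedHarmonicMean, hb]

lemma weightedHarmonicMean_one (ha : a ≠ 0) : weightedHarmonicMean a b 1 = b := by
  simp [weightedHarmonicMean, ha]

lemma weightedHarmonicMean_sub_left (hD : a * x + b * (1 - x) ≠ 0) :
    weightedHarmonicMean a b x - a = a * (b - a) * x / (a * x + b * (1 - x)) := by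
  rw [weightedHarmonicMean, div_sub' hD]
  ring

lemma right_sub_weightedHarmonicMean (hD : a * x + b * (1 - x) ≠ 0) :
    b - weightedHarmonicMean a b x = b * (b - a) * (1 - x) / (a * x + b * (1 - x)) := by
  rw [weightedHarmonicMean, sub_div' hD]
  ring

lemma hasDerivAt_weightedHarmonicMean (hD : a * x + b * (1 - x) ≠ 0) :
    HasDerivAt (weightedHarmonicMean a b) (a * b * (b - a) / (a * x + b * (1 - x)) ^ 2) x := by
  have hdenom : HasDerivAt (fun x => a * x + b * (1 - x)) (a - b) x := by
    simpa [sub_eq_add_neg] using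
      ((hasDerivAt_id x).const_mul a).fun_add (((hasDerivAt_id x).const_sub 1).const_mul b)
  refine ((hasDerivAt_const x (a * b)).div hdenom hD).congr_deriv ?_
  ring

lemma convexCombination_pos (ha : 0 < a) (hb : 0 < b) (hx : x ∈ Icc (0 : ℝ) 1) :
    0 < a * x + b * (1 - x) := by
  simpa [mul_comm] using
    convex_Ioi (0 : ℝ) ha hb hx.1 (sub_nonneg.2 hx.2) (add_sub_cancel x 1)

lemma weightedHarmonicMean_integrand_mul_deriv (p q s : ℝ) (ha : 0 < a) (hab : a < b)
    (hx : x ∈ Icc (0 : ℝ) 1) :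
    weightedHarmonicMean a b x ^ (-s) * (weightedHarmonicMean a b x - a) ^ (p - 1) *
          (b - weightedHarmonicMean a b x) ^ (q - 1) *
        (a * b * (b - a) / (a * x + b * (1 - x)) ^ 2) =
      a ^ (p - s) * b ^ (q - s) * (b - a) ^ (p + q - 1) *
        ((a * x + b * (1 - x)) ^ (s - p - q) * (x ^ (p - 1) * (1 - x) ^ (q - 1))) := by
  have hb : 0 < b := ha.trans hab
  have hba : 0 < b - a := sub_pos.2 hab
  have hx0 : 0 ≤ x := hx.1
  have hx1 : 0 ≤ 1 - x := sub_nonneg.2 hx.2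
  have hD := convexCombination_pos ha hb hx
  rw [weightedHarmonicMean_sub_left hD.ne', right_sub_weightedHarmonicMean hD.ne',
    weightedHarmonicMean]
  set D := a * x + b * (1 - x)
  have ha_rpow : a ^ (p - s) = a ^ (-s) * a ^ (p - 1) * a := by
    rw [← rpow_add ha, ← rpow_add_one ha.ne']; ring_nf
  have hb_rpow : b ^ (q - s) = b ^ (-s) * b ^ (q - 1) * b := by
    rw [← rpow_add hb, ← rpow_add_one hb.ne']; ring_nf
  have hba_rpow : (b - a) ^ (p + q - 1) = (b - a) ^ (p - 1) * (b - a) ^ (q - 1) * (b - a) := by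
    rw [← rpow_add hba, ← rpow_add_one hba.ne']; ring_nf
  have hD_rpow : D ^ (s - p - q) = (D ^ (-s) * D ^ (p - 1) * D ^ (q - 1) * D ^ 2)⁻¹ := by
    rw [← rpow_two, ← rpow_add hD, ← rpow_add hD, ← rpow_add hD, ← rpow_neg hD.le]; ring_nf
  rw [ha_rpow, hb_rpow, hba_rpow, hD_rpow, div_rpow (by positivity) hD.le,
    div_rpow (by positivity) hD.le, div_rpow (by positivity) hD.le, mul_rpow ha.le hb.le,
    mul_rpow (by positivity) hx0, mul_rpow ha.le hba.le, mul_rpow (by positivity) hx1,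
    mul_rpow hb.le hba.le]
  field_simp

theorem integral_rpow_mul_sub_rpow_mul_sub_rpow (p q s : ℝ) (ha : 0 < a) (hab : a < b) :
    ∫ u in a..b, u ^ (-s) * (u - a) ^ (p - 1) * (b - u) ^ (q - 1) =
      a ^ (p - s) * b ^ (q - s) * (b - a) ^ (p + q - 1) *
        ∫ x in (0 : ℝ)..1, (a * x + b * (1 - x)) ^ (s - p - q) *
          (x ^ (p - 1) * (1 - x) ^ (q - 1)) := by
  have hb : 0 < b := ha.trans hab
  have hderiv {x : ℝ} (hx : x ∈ Icc (0 : ℝ) 1) :=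
    hasDerivAt_weightedHarmonicMean (convexCombination_pos ha hb hx).ne'
  have hsubst := integral_comp_mul_deriv_of_deriv_nonneg (a := 0) (b := 1)
    (f := weightedHarmonicMean a b)
    (f' := fun x => a * b * (b - a) / (a * x + b * (1 - x)) ^ 2)
    (g := fun u => u ^ (-s) * (u - a) ^ (p - 1) * (b - u) ^ (q - 1))
    (fun x hx => (hderiv (by simpa using hx)).continuousAt.continuousWithinAt)
    (fun x hx => hderiv (Ioo_subset_Icc_self (by simpa using hx)))
    (fun x _ => by have := sub_pos.2 hab; positivity)
  rw [weightedHarmonicMean_zero hb.ne', weightedHarmonicMean_one ha.ne'] at hsubst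
  rw [← hsubst, ← intervalIntegral.integral_const_mul]
  exact integral_congr fun x hx =>
    weightedHarmonicMean_integrand_mul_deriv p q s ha hab (by simpa using hx)

end WeightedHarmonicMean

section Bounds

variable {a b p q : ℝ}

lemma rpow_le_rpow_mul_rpow_min_zero {c d θ : ℝ} (σ : ℝ) (hc : 0 < c) (hθ : 0 < θ)
    (hlower : c * θ ≤ d) (hupper : d ≤ c) : d ^ σ ≤ c ^ σ * θ ^ min σ 0 := by
  have hcθ : 0 < c * θ := mul_pos hc hθ
  rcases le_total 0 σ with hσ | hσ
  · rw [min_eq_right hσ, rpow_zero, mul_one]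
    exact rpow_le_rpow (hcθ.le.trans hlower) hupper hσ
  · rw [min_eq_left hσ, ← mul_rpow hc.le hθ.le]
    exact rpow_le_rpow_of_nonpos hcθ hlower hσ

lemma integral_convexCombination_rpow_mul_le {σ : ℝ} (ha : 0 < a) (hab : a ≤ b)
    (hp : 0 < p) (hq : 0 < q) (hσ : 0 < q + σ) :
    ∫ x in (0 : ℝ)..1, (a * x + b * (1 - x)) ^ σ * (x ^ (p - 1) * (1 - x) ^ (q - 1)) ≤
      b ^ σ * beta p (q + min σ 0) := by
  have hb : 0 < b := ha.trans_le hab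
  have hqσ : 0 < q + min σ 0 := by
    rw [← min_add_add_left, add_zero]
    exact lt_min hσ hq
  rw [← integral_rpow_mul_one_sub_rpow hp hqσ, ← intervalIntegral.integral_const_mul]
  refine integral_mono_on_of_le_Ioo zero_le_one ?_
    ((intervalIntegrable_rpow_mul_one_sub_rpow hp hqσ).const_mul _) fun x hx => ?_
  · refine (intervalIntegrable_rpow_mul_one_sub_rpow hp hq).continuousOn_mul ?_
    exact ContinuousOn.rpow_const (by fun_prop) fun x hx =>
      Or.inl (convexCombination_pos ha hb (by simpa using hx)).ne'
  · have hx0 : 0 ≤ x := hx.1.le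
    have hx1 : 0 < 1 - x := sub_pos.2 hx.2
    have hlower : b * (1 - x) ≤ a * x + b * (1 - x) :=
      le_add_of_nonneg_left (mul_nonneg ha.le hx0)
    have hupper : a * x + b * (1 - x) ≤ b := by
      linarith [mul_le_mul_of_nonneg_right hab hx0]
    calc (a * x + b * (1 - x)) ^ σ * (x ^ (p - 1) * (1 - x) ^ (q - 1))
        ≤ b ^ σ * (1 - x) ^ min σ 0 * (x ^ (p - 1) * (1 - x) ^ (q - 1)) := by
          gcongr
          exact rpow_le_rpow_mul_rpow_min_zero σ hb hx1 hlower hupper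
      _ = b ^ σ * (x ^ (p - 1) * (1 - x) ^ (q + min σ 0 - 1)) := by
          rw [show q + min σ 0 - 1 = min σ 0 + (q - 1) by ring, rpow_add hx1]
          ring

theorem integral_rpow_mul_sub_rpow_mul_sub_rpow_le {s : ℝ} (ha : 0 < a) (hab : a < b)
    (hp : 0 < p) (hq : 0 < q) (hps : p < s) :
    ∫ u in a..b, u ^ (-s) * (u - a) ^ (p - 1) * (b - u) ^ (q - 1) ≤
      a ^ (p - s) * b ^ (-p) * (b - a) ^ (p + q - 1) * beta p (min q (s - p)) := by
  have hb : 0 < b := ha.trans hab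
  have _ : 0 < b - a := sub_pos.2 hab
  have hmin : q + min (s - p - q) 0 = min q (s - p) := by
    rw [← min_add_add_left, add_zero, min_comm, add_sub_cancel]
  rw [integral_rpow_mul_sub_rpow_mul_sub_rpow p q s ha hab]
  calc _ ≤ a ^ (p - s) * b ^ (q - s) * (b - a) ^ (p + q - 1) *
        (b ^ (s - p - q) * beta p (q + min (s - p - q) 0)) := by
        gcongr
        exact integral_convexCombination_rpow_mul_le ha hab.le hp hq (by linarith)
    _ = a ^ (p - s) * b ^ (-p) * (b - a) ^ (p + q - 1) * beta p (min q (s - p)) := by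
        rw [hmin, show -p = (q - s) + (s - p - q) by ring, rpow_add hb]
        ring

end Bounds

lemma integral_comp_cosh_mul_sinh {x y : ℝ} (g : ℝ → ℝ) (hx : 0 ≤ x) (hy : 0 ≤ y) :
    ∫ l in x..y, g (cosh l) * sinh l = ∫ u in cosh x..cosh y, g u :=
  integral_comp_mul_deriv_of_deriv_nonneg continuous_cosh.continuousOn
    (fun l _ => hasDerivAt_cosh l)
    (fun _ hl => sinh_nonneg_iff.2 ((le_min hx hy).trans hl.1.le))

lemma integral_spherical_mean_weight_eq {r t : ℝ} (k : ℝ) (hr : 0 ≤ r) (ht : 0 ≤ t) :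
    (∫ l in |r - t|..(r + t), cosh l ^ (-k - 1 / 2 : ℝ) * sinh l *
        ((cosh (r + t) - cosh l) * (cosh l - cosh (r - t))) ^ (-(1 / 2) : ℝ)) =
      ∫ u in cosh (r - t)..cosh (r + t), u ^ (-(k + 1 / 2)) *
        (u - cosh (r - t)) ^ ((1 / 2 : ℝ) - 1) * (cosh (r + t) - u) ^ ((1 / 2 : ℝ) - 1) := by
  have hle : |r - t| ≤ r + t := abs_le.2 ⟨by linarith, by linarith⟩
  rw [← cosh_abs (r - t), ← integral_comp_cosh_mul_sinh _ (abs_nonneg _) (add_nonneg hr ht)]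
  refine integral_congr fun l hl => ?_
  rw [uIcc_of_le hle] at hl
  have hl0 : 0 ≤ l := (abs_nonneg _).trans hl.1
  have hlower : cosh |r - t| ≤ cosh l := by
    rw [cosh_le_cosh, abs_abs, abs_of_nonneg hl0]
    exact hl.1
  have hupper : cosh l ≤ cosh (r + t) := by
    rw [cosh_le_cosh, abs_of_nonneg hl0]
    exact hl.2.trans (le_abs_self _)
  rw [mul_rpow (sub_nonneg.2 hupper) (sub_nonneg.2 hlower)]
  ring_nf

theorem spherical_mean_weight_bound (k : ℝ) (hk : 0 < k) :
    ∃ N : ℝ, 0 < N ∧ ∀ r t : ℝ, 0 < r → 0 < t →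
      (∫ l in |r - t|..(r + t),
        Real.cosh l ^ (-k - 1 / 2 : ℝ) * Real.sinh l *
          ((Real.cosh (r + t) - Real.cosh l) *
            (Real.cosh l - Real.cosh (r - t))) ^ (-(1 / 2) : ℝ))
      ≤ Real.pi * N * Real.cosh (t + r) ^ (-(1 / 2) : ℝ) * Real.cosh (t - r) ^ (-k) := by
  have hbeta : 0 < beta (1 / 2) (min (1 / 2) k) :=
    beta_pos one_half_pos (lt_min one_half_pos hk)
  refine ⟨beta (1 / 2) (min (1 / 2) k) / π, by positivity, fun r t hr ht => ?_⟩
  have hlt : cosh (r - t) < cosh (r + t) := by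
    rw [cosh_lt_cosh, abs_of_pos (add_pos hr ht)]
    exact abs_lt.2 ⟨by linarith, by linarith⟩
  rw [integral_spherical_mean_weight_eq k hr.le ht.le, add_comm t r, ← cosh_neg (t - r), neg_sub]
  refine (integral_rpow_mul_sub_rpow_mul_sub_rpow_le (cosh_pos _) hlt one_half_pos
    one_half_pos (by linarith)).trans_eq ?_
  rw [show (1 / 2 : ℝ) - (k + 1 / 2) = -k by ring, show k + 1 / 2 - (1 / 2 : ℝ) = k by ring,
    show (1 / 2 : ℝ) + 1 / 2 - 1 = 0 by ring, rpow_zero]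
  field_simp
end

section
/- Let k > 0. There exists a constant N_k > 0 such that for all r, t > 0: ∫_{|r−t|}^{r+t} (cosh λ)^{−k−1/2} sinh λ · (2cosh(r+λ) − 2cosh t)^{−1/2} dλ ≤ N_k (cosh r)^{−1/2} (cosh(t−r))^{−k}. -/
open MeasureTheory intervalIntegral

/-!
Writing `s = λ - |r - t|`, the identity
`2 cosh x - 2 cosh y = e ^ x (1 - e ^ (-(x + y))) (1 - e ^ (-(x - y)))` gives
`2 cosh (r + λ) - 2 cosh t ≥ cosh r · sinh λ · (1 - e ^ (-s))`. As `(sinh λ / cosh λ) ^ (1/2) ≤ 1`,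
the integrand is at most `cosh r ^ (-1/2) · cosh λ ^ (-k) · (1 - e ^ (-s)) ^ (-1/2)`. Since
`cosh (|r - t| + s) ≥ cosh (t - r) e ^ s / 2`, what remains is dominated by
`(s ^ (-1/2) + 1) e ^ (-k s)`, which is integrable over the whole half-line `s > 0`.
-/

section HyperbolicEstimates

open Real

lemma two_mul_cosh_sub_two_mul_cosh (x y : ℝ) :
    2 * cosh x - 2 * cosh y = exp x * ((1 - exp (-(x + y))) * (1 - exp (-(x - y)))) := by
  have hxy : exp x * exp (-(x + y)) = exp (-y) := by rw [← exp_add]; ring_nf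
  have hyx : exp x * exp (-(x - y)) = exp y := by rw [← exp_add]; ring_nf
  have hprod : exp (-y) * exp (-(x - y)) = exp (-x) := by rw [← exp_add]; ring_nf
  rw [cosh_eq, cosh_eq]
  linear_combination (1 - exp (-(x - y))) * hxy + hyx - hprod

lemma cosh_le_exp {x : ℝ} (hx : 0 ≤ x) : cosh x ≤ exp x := by
  linarith [cosh_add_sinh x, sinh_nonneg_iff.2 hx]

lemma sinh_le_exp_sub_one (x : ℝ) : sinh x ≤ exp x - 1 := by
  linarith [cosh_add_sinh x, one_le_cosh x]

lemma cosh_mul_exp_le_two_mul_cosh_add {a : ℝ} (ha : 0 ≤ a) (s : ℝ) :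
    cosh a * exp s ≤ 2 * cosh (a + s) :=
  calc cosh a * exp s ≤ exp a * exp s := by gcongr; exact cosh_le_exp ha
    _ = exp (a + s) := (exp_add a s).symm
    _ ≤ 2 * cosh (a + s) := by rw [cosh_eq]; linarith [exp_pos (-(a + s))]

lemma cosh_add_rpow_neg_le {k a : ℝ} (hk : 0 ≤ k) (ha : 0 ≤ a) (s : ℝ) :
    cosh (a + s) ^ (-k) ≤ 2 ^ k * cosh a ^ (-k) * exp (-k * s) := by
  have hca := cosh_pos a
  calc cosh (a + s) ^ (-k) ≤ (cosh a * exp s / 2) ^ (-k) :=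
        rpow_le_rpow_of_nonpos (by positivity)
          (by linarith [cosh_mul_exp_le_two_mul_cosh_add ha s]) (by linarith)
    _ = 2 ^ k * cosh a ^ (-k) * exp (-k * s) := by
        rw [div_rpow (by positivity) zero_le_two, mul_rpow hca.le (exp_pos s).le, ← exp_mul,
          rpow_neg zero_le_two, div_inv_eq_mul, mul_comm s]
        ring

lemma cosh_mul_sinh_mul_one_sub_exp_neg_le {r t l : ℝ} (hr : 0 ≤ r) (hl : |r - t| ≤ l) :
    cosh r * sinh l * (1 - exp (-(l - |r - t|))) ≤ 2 * cosh (r + l) - 2 * cosh t := by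
  have hl0 : 0 ≤ l := (abs_nonneg _).trans hl
  have one_sub_exp_neg_mono {x y : ℝ} (hxy : x ≤ y) : 1 - exp (-x) ≤ 1 - exp (-y) := by gcongr
  have one_sub_exp_neg_nonneg {x : ℝ} (hx : 0 ≤ x) : 0 ≤ 1 - exp (-x) := by simpa using hx
  have hgap := one_sub_exp_neg_nonneg (sub_nonneg.2 hl)
  have hprod : (1 - exp (-l)) * (1 - exp (-(l - |r - t|))) ≤
      (1 - exp (-(r + l + t))) * (1 - exp (-(r + l - t))) := by
    have hle := neg_abs_le (r - t)
    have hge := le_abs_self (r - t)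
    rcases le_total 0 t with ht | ht
    · exact mul_le_mul (one_sub_exp_neg_mono (by linarith)) (one_sub_exp_neg_mono (by linarith))
        hgap (one_sub_exp_neg_nonneg (by linarith))
    · rw [mul_comm]
      exact mul_le_mul (one_sub_exp_neg_mono (by linarith)) (one_sub_exp_neg_mono (by linarith))
        (one_sub_exp_neg_nonneg hl0) (one_sub_exp_neg_nonneg (by linarith))
  calc cosh r * sinh l * (1 - exp (-(l - |r - t|)))
      ≤ exp r * (exp l - 1) * (1 - exp (-(l - |r - t|))) := by
        have := sinh_nonneg_iff.2 hl0
        gcongr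
        exacts [cosh_le_exp hr, sinh_le_exp_sub_one l]
    _ = exp (r + l) * ((1 - exp (-l)) * (1 - exp (-(l - |r - t|)))) := by
        rw [exp_add, exp_neg l]
        field_simp
    _ ≤ exp (r + l) * ((1 - exp (-(r + l + t))) * (1 - exp (-(r + l - t)))) := by gcongr
    _ = 2 * cosh (r + l) - 2 * cosh t := (two_mul_cosh_sub_two_mul_cosh _ _).symm

end HyperbolicEstimates

section Majorant

open Real Set

lemma one_sub_exp_neg_rpow_neg_le {p s : ℝ} (hp : 0 ≤ p) (hp1 : p ≤ 1) (hs : 0 < s) :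
    (1 - exp (-s)) ^ (-p) ≤ s ^ (-p) + 1 := by
  have hlower : (s⁻¹ + 1)⁻¹ ≤ 1 - exp (-s) := by
    have hexp : exp (-s) ≤ (s + 1)⁻¹ := by
      rw [exp_neg]
      gcongr
      exact add_one_le_exp s
    have hinv : (s⁻¹ + 1)⁻¹ = 1 - (s + 1)⁻¹ := by field_simp; ring
    linarith
  calc (1 - exp (-s)) ^ (-p) ≤ (s⁻¹ + 1)⁻¹ ^ (-p) :=
        rpow_le_rpow_of_nonpos (by positivity) hlower (by linarith)
    _ = (s⁻¹ + 1) ^ p := by rw [rpow_neg_eq_inv_rpow, inv_inv]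
    _ ≤ s⁻¹ ^ p + 1 ^ p := rpow_add_le_add_rpow (by positivity) zero_le_one hp hp1
    _ = s ^ (-p) + 1 := by rw [rpow_neg_eq_inv_rpow, one_rpow]

lemma integrableOn_rpow_neg_mul_exp {k p : ℝ} (hk : 0 < k) (hp : p < 1) :
    IntegrableOn (fun s : ℝ ↦ s ^ (-p) * exp (-k * s)) (Ioi 0) := by
  simpa only [rpow_one] using
    integrableOn_rpow_mul_exp_neg_mul_rpow (neg_lt_neg hp) one_pos hk

lemma integrableOn_rpow_neg_add_one_mul_exp {k p : ℝ} (hk : 0 < k) (hp : p < 1) :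
    IntegrableOn (fun s : ℝ ↦ (s ^ (-p) + 1) * exp (-k * s)) (Ioi 0) := by
  simp only [add_mul, one_mul]
  exact (integrableOn_rpow_neg_mul_exp hk hp).add (exp_neg_integrableOn_Ioi 0 hk)

lemma integral_rpow_neg_add_one_mul_exp {k p : ℝ} (hk : 0 < k) (hp : p < 1) :
    ∫ s in Ioi (0 : ℝ), (s ^ (-p) + 1) * exp (-k * s) =
      (1 / k) ^ (1 - p) * Gamma (1 - p) + 1 / k := by
  have hGamma : ∫ s in Ioi (0 : ℝ), s ^ (-p) * exp (-k * s) =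
      (1 / k) ^ (1 - p) * Gamma (1 - p) := by
    simpa using integral_rpow_mul_exp_neg_mul_Ioi (sub_pos.2 hp) hk
  have hexp : ∫ s in Ioi (0 : ℝ), exp (-k * s) = 1 / k := by
    simpa using integral_exp_mul_Ioi (neg_lt_zero.2 hk) 0
  simp only [add_mul, one_mul]
  rw [integral_add (integrableOn_rpow_neg_mul_exp hk hp) (exp_neg_integrableOn_Ioi 0 hk), hGamma,
    hexp]

end Majorant

section HalfLine

open Set

variable {E : Type*} [NormedAddCommGroup E]

lemma integrableOn_Ioi_comp_sub_right_iff (f : ℝ → E) (a b : ℝ) :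
    IntegrableOn (fun x ↦ f (x - a)) (Ioi b) ↔ IntegrableOn f (Ioi (b - a)) := by
  simpa [Function.comp_def] using
    (measurePreserving_sub_right volume a).integrableOn_comp_preimage
      (measurableEmbedding_subRight a) (f := f) (s := Ioi (b - a))

lemma integral_Ioi_comp_sub_right [NormedSpace ℝ E] (f : ℝ → E) (a b : ℝ) :
    ∫ x in Ioi b, f (x - a) = ∫ x in Ioi (b - a), f x := by
  simpa using (measurePreserving_sub_right volume a).setIntegral_preimage_emb
    (measurableEmbedding_subRight a) f (Ioi (b - a))

lemma intervalIntegral_le_integral_Ioi {f : ℝ → ℝ} {a b : ℝ} (hab : a ≤ b)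
    (hf : IntegrableOn f (Ioi a)) (hf0 : ∀ x ∈ Ioi a, 0 ≤ f x) :
    ∫ x in a..b, f x ≤ ∫ x in Ioi a, f x := by
  rw [integral_of_le hab]
  exact setIntegral_mono_set hf (ae_restrict_of_forall_mem measurableSet_Ioi hf0)
    Ioc_subset_Ioi_self.eventuallyLE

end HalfLine

section WeightedKernel

open Real Set

/-- The integrand of the weighted kernel bound, as a function of the integration variable `l`
(the `λ` of the paper). At a zero of `2 cosh (r + l) - 2 cosh t`, as at `l = t - r`, where the
integrand is singular, its value is `0`. -/
noncomputable def weightedKernel (k r t l : ℝ) : ℝ :=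
  cosh l ^ (-k - 1 / 2 : ℝ) * sinh l * (2 * cosh (r + l) - 2 * cosh t) ^ (-(1 / 2) : ℝ)

variable {k r t l : ℝ}

lemma measurable_weightedKernel (k r t : ℝ) : Measurable (weightedKernel k r t) := by
  unfold weightedKernel
  fun_prop

lemma weightedKernel_nonneg (k : ℝ) (hr : 0 ≤ r) (hl : |r - t| ≤ l) :
    0 ≤ weightedKernel k r t l := by
  have hsinh : 0 ≤ sinh l := sinh_nonneg_iff.2 ((abs_nonneg _).trans hl)
  have hgap : 0 ≤ 1 - exp (-(l - |r - t|)) := by simpa using hl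
  have hdiff : 0 ≤ 2 * cosh (r + l) - 2 * cosh t :=
    (mul_nonneg (mul_nonneg (cosh_pos r).le hsinh) hgap).trans
      (cosh_mul_sinh_mul_one_sub_exp_neg_le hr hl)
  exact mul_nonneg (mul_nonneg (rpow_nonneg (cosh_pos l).le _) hsinh) (rpow_nonneg hdiff _)

lemma cosh_rpow_mul_sinh_rpow_le (k : ℝ) (hl : 0 ≤ l) :
    cosh l ^ (-k - 1 / 2 : ℝ) * (sinh l * sinh l ^ (-(1 / 2) : ℝ)) ≤ cosh l ^ (-k) := by
  have hsinh := sinh_nonneg_iff.2 hl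
  calc cosh l ^ (-k - 1 / 2 : ℝ) * (sinh l * sinh l ^ (-(1 / 2) : ℝ))
      = cosh l ^ (-k - 1 / 2 : ℝ) * sinh l ^ (1 / 2 : ℝ) := by
        rw [← rpow_one_add' hsinh (by norm_num)]
        norm_num
    _ ≤ cosh l ^ (-k - 1 / 2 : ℝ) * cosh l ^ (1 / 2 : ℝ) := by gcongr; exact (sinh_lt_cosh l).le
    _ = cosh l ^ (-k) := by rw [← rpow_add (cosh_pos l), sub_add_cancel]

lemma weightedKernel_le (k : ℝ) (hr : 0 ≤ r) (hl : |r - t| < l) :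
    weightedKernel k r t l ≤
      cosh r ^ (-(1 / 2) : ℝ) * cosh l ^ (-k) * (1 - exp (-(l - |r - t|))) ^ (-(1 / 2) : ℝ) := by
  have hl0 : 0 < l := (abs_nonneg _).trans_lt hl
  have hsinh := sinh_pos_iff.2 hl0
  have hgap : 0 < 1 - exp (-(l - |r - t|)) := by simpa using hl
  set g := 1 - exp (-(l - |r - t|))
  calc weightedKernel k r t l
      ≤ cosh l ^ (-k - 1 / 2 : ℝ) * sinh l * (cosh r * sinh l * g) ^ (-(1 / 2) : ℝ) :=
        mul_le_mul_of_nonneg_left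
          (rpow_le_rpow_of_nonpos (by positivity) (cosh_mul_sinh_mul_one_sub_exp_neg_le hr hl.le)
            (by norm_num))
          (by positivity)
    _ = cosh r ^ (-(1 / 2) : ℝ) *
          (cosh l ^ (-k - 1 / 2 : ℝ) * (sinh l * sinh l ^ (-(1 / 2) : ℝ))) *
          g ^ (-(1 / 2) : ℝ) := by
        rw [mul_rpow (by positivity) hgap.le, mul_rpow (cosh_pos r).le hsinh.le]
        ring
    _ ≤ cosh r ^ (-(1 / 2) : ℝ) * cosh l ^ (-k) * g ^ (-(1 / 2) : ℝ) := by
        gcongr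
        exact cosh_rpow_mul_sinh_rpow_le k hl0.le

/-- An integrable pointwise bound for `weightedKernel k r t` on `l > |r - t|`. -/
noncomputable def weightedKernelMajorant (k r t l : ℝ) : ℝ :=
  2 ^ k * cosh r ^ (-(1 / 2) : ℝ) * cosh (t - r) ^ (-k) *
    (((l - |r - t|) ^ (-(1 / 2) : ℝ) + 1) * exp (-k * (l - |r - t|)))

lemma weightedKernel_le_majorant (hk : 0 ≤ k) (hr : 0 ≤ r) (hl : |r - t| < l) :
    weightedKernel k r t l ≤ weightedKernelMajorant k r t l := by
  have hcosh : cosh l ^ (-k) ≤ 2 ^ k * cosh (t - r) ^ (-k) * exp (-k * (l - |r - t|)) := by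
    have h := cosh_add_rpow_neg_le hk (abs_nonneg (r - t)) (l - |r - t|)
    rwa [add_sub_cancel, cosh_abs, ← cosh_neg (r - t), neg_sub] at h
  have hgap : (1 - exp (-(l - |r - t|))) ^ (-(1 / 2) : ℝ) ≤
      (l - |r - t|) ^ (-(1 / 2) : ℝ) + 1 :=
    one_sub_exp_neg_rpow_neg_le (by norm_num) (by norm_num) (sub_pos.2 hl)
  calc weightedKernel k r t l
      ≤ cosh r ^ (-(1 / 2) : ℝ) * cosh l ^ (-k) *
          (1 - exp (-(l - |r - t|))) ^ (-(1 / 2) : ℝ) := weightedKernel_le k hr hl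
    _ ≤ cosh r ^ (-(1 / 2) : ℝ) *
          (2 ^ k * cosh (t - r) ^ (-k) * exp (-k * (l - |r - t|))) *
          ((l - |r - t|) ^ (-(1 / 2) : ℝ) + 1) := by
        have hgap_nonneg : 0 ≤ 1 - exp (-(l - |r - t|)) := by simpa using hl.le
        gcongr
    _ = weightedKernelMajorant k r t l := by rw [weightedKernelMajorant]; ring

lemma integrableOn_weightedKernelMajorant (r t : ℝ) (hk : 0 < k) :
    IntegrableOn (weightedKernelMajorant k r t) (Ioi |r - t|) := by
  refine Integrable.const_mul ((integrableOn_Ioi_comp_sub_right_iff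
    (fun s ↦ (s ^ (-(1 / 2) : ℝ) + 1) * exp (-k * s)) _ _).2 ?_) _
  rw [sub_self]
  exact integrableOn_rpow_neg_add_one_mul_exp hk one_half_lt_one

lemma integral_weightedKernelMajorant (r t : ℝ) (hk : 0 < k) :
    ∫ l in Ioi |r - t|, weightedKernelMajorant k r t l =
      2 ^ k * (√(π / k) + 1 / k) * cosh r ^ (-(1 / 2) : ℝ) * cosh (t - r) ^ (-k) := by
  have hval : ∫ s in Ioi (0 : ℝ), (s ^ (-(1 / 2) : ℝ) + 1) * exp (-k * s) =
      √(π / k) + 1 / k := by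
    rw [integral_rpow_neg_add_one_mul_exp hk one_half_lt_one, sub_half, Gamma_one_half_eq,
      ← sqrt_eq_rpow, ← sqrt_mul (by positivity), one_div_mul_eq_div]
  simp only [weightedKernelMajorant]
  rw [MeasureTheory.integral_const_mul,
    integral_Ioi_comp_sub_right (fun s ↦ (s ^ (-(1 / 2) : ℝ) + 1) * exp (-k * s)), sub_self, hval]
  ring

lemma integrableOn_weightedKernel (t : ℝ) (hk : 0 < k) (hr : 0 ≤ r) :
    IntegrableOn (weightedKernel k r t) (Ioi |r - t|) := by
  refine (integrableOn_weightedKernelMajorant r t hk).mono'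
    (measurable_weightedKernel k r t).aestronglyMeasurable
    (ae_restrict_of_forall_mem measurableSet_Ioi fun l hl ↦ ?_)
  rw [norm_of_nonneg (weightedKernel_nonneg k hr (le_of_lt hl))]
  exact weightedKernel_le_majorant hk.le hr hl

theorem weighted_kernel_bound_general (k r t : ℝ) (hk : 0 < k) (hr : 0 ≤ r) :
    IntegrableOn (weightedKernel k r t) (Ioi |r - t|) ∧
      ∫ l in Ioi |r - t|, weightedKernel k r t l ≤
        2 ^ k * (√(π / k) + 1 / k) * cosh r ^ (-(1 / 2) : ℝ) * cosh (t - r) ^ (-k) := by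
  have hint := integrableOn_weightedKernel t hk hr
  refine ⟨hint, ?_⟩
  rw [← integral_weightedKernelMajorant r t hk]
  exact setIntegral_mono_on hint (integrableOn_weightedKernelMajorant r t hk) measurableSet_Ioi
    fun _ hl ↦ weightedKernel_le_majorant hk.le hr hl

end WeightedKernel

theorem weighted_kernel_bound (k : ℝ) (hk : 0 < k) :
    ∃ N : ℝ, 0 < N ∧ ∀ r t : ℝ, 0 < r → 0 < t →
      (∫ l in |r - t|..(r + t),
        Real.cosh l ^ (-k - 1 / 2 : ℝ) * Real.sinh l *
          (2 * Real.cosh (r + l) - 2 * Real.cosh t) ^ (-(1 / 2) : ℝ))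
      ≤ N * Real.cosh r ^ (-(1 / 2) : ℝ) * Real.cosh (t - r) ^ (-k) := by
  refine ⟨2 ^ k * (√(Real.pi / k) + 1 / k), by positivity, fun r t hr ht ↦ ?_⟩
  obtain ⟨hint, hbound⟩ := weighted_kernel_bound_general k r t hk hr.le
  have hle : |r - t| ≤ r + t := abs_le.2 ⟨by linarith, by linarith⟩
  exact (intervalIntegral_le_integral_Ioi hle hint
    fun _ hl ↦ weightedKernel_nonneg k hr.le (le_of_lt hl)).trans hbound
end

section
/- For every continuous nonnegative function φ : [0,∞) → ℝ and all t, r > 0: I(t,r,φ) ≥ ∫_{|r−t|}^{r+t} φ(λ) sinh λ · (2cosh(r+λ))^{−1/2} dλ. -/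
open MeasureTheory intervalIntegral

/-- The radial form, at geodesic radius `r` and time `t`, of the solution of the shifted
wave equation on the hyperbolic plane with data `u(0) = 0`, `∂ₜu(0) = φ`. -/
noncomputable def Isol (t r : ℝ) (φ : ℝ → ℝ) : ℝ :=
  (1 / (Real.pi * Real.sqrt 2)) *
    ∫ s in (0 : ℝ)..t, ∫ l in |r - s|..(r + s),
      φ l * Real.sinh l * Real.sinh s *
        ((Real.cosh t - Real.cosh s) * (Real.cosh (r + s) - Real.cosh l) *
          (Real.cosh l - Real.cosh (r - s))) ^ (-(1 / 2) : ℝ)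

open Set Real

/-! The factor `(cosh (r + s) - cosh l) * (cosh l - cosh (r - s))` is symmetric in the side lengths
`r, s, l` of a hyperbolic triangle. Hence, once the order of integration is exchanged, the integrand
in `s` is an arcsine density in the variable `cosh s` on the interval `(cosh (r - l), cosh t)`, of
total mass `π`, times `(cosh (r + l) - cosh s)⁻¹ᐟ² ≥ (cosh (r + l))⁻¹ᐟ²`. Discarding the part
`l < |r - t|` of the region of integration leaves exactly the asserted bound. In the original order
the kernel is an arcsine density in `cosh l`, which makes the double integral absolutely
convergent. -/

section Slices

variable {X Y E : Type*} [MeasurableSpace X] [MeasurableSpace Y] [NormedAddCommGroup E]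
  {μ : Measure X} {ν : Measure Y} [SFinite ν] {S : Set (X × Y)} {F : X × Y → E}

theorem integrableOn_prod_iff_slices (hS : MeasurableSet S)
    (hF : AEStronglyMeasurable F ((μ.prod ν).restrict S)) :
    IntegrableOn F S (μ.prod ν) ↔
      (∀ᵐ x ∂μ, IntegrableOn (fun y => F (x, y)) (Prod.mk x ⁻¹' S) ν) ∧
        Integrable (fun x => ∫ y in Prod.mk x ⁻¹' S, ‖F (x, y)‖ ∂ν) μ := by
  have hslice (x : X) : MeasurableSet (Prod.mk x ⁻¹' S) := measurable_prodMk_left hS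
  rw [← integrable_indicator_iff hS,
    integrable_prod_iff ((aestronglyMeasurable_indicator_iff hS).2 hF)]
  simp only [norm_indicator_eq_indicator_norm, ← integrable_indicator_iff (hslice _),
    ← MeasureTheory.integral_indicator (hslice _)]
  rfl

variable [NormedSpace ℝ E]

theorem setIntegral_prod_eq_integral_slices [SFinite μ] (hS : MeasurableSet S)
    (hF : IntegrableOn F S (μ.prod ν)) :
    ∫ p in S, F p ∂μ.prod ν = ∫ x, ∫ y in Prod.mk x ⁻¹' S, F (x, y) ∂ν ∂μ := by
  rw [← MeasureTheory.integral_indicator hS, integral_prod _ (hF.integrable_indicator hS)]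
  simp only [← MeasureTheory.integral_indicator (measurable_prodMk_left hS)]
  rfl

theorem setIntegral_prod_eq_integral_slices_symm [SFinite μ] (hS : MeasurableSet S)
    (hF : IntegrableOn F S (μ.prod ν)) :
    ∫ p in S, F p ∂μ.prod ν = ∫ y, ∫ x in (·, y) ⁻¹' S, F (x, y) ∂μ ∂ν := by
  rw [← MeasureTheory.integral_indicator hS, integral_prod_symm _ (hF.integrable_indicator hS)]
  simp only [← MeasureTheory.integral_indicator (measurable_prodMk_right hS)]
  rfl

theorem integrable_integral_slices_symm [SFinite μ] (hS : MeasurableSet S)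
    (hF : IntegrableOn F S (μ.prod ν)) :
    Integrable (fun y => ∫ x in (·, y) ⁻¹' S, F (x, y) ∂μ) ν := by
  simp only [← MeasureTheory.integral_indicator (measurable_prodMk_right hS)]
  exact (hF.integrable_indicator hS).integral_prod_right

end Slices

section Arcsine

/-- The arcsine density of the interval `(A, B)`, normalized to total mass `π`. -/
noncomputable def arcsineDensity (A B y : ℝ) : ℝ :=
  ((B - y) * (y - A)) ^ (-(1 / 2) : ℝ)

theorem arcsineDensity_nonneg {A B y : ℝ} (hA : A ≤ y) (hB : y ≤ B) : 0 ≤ arcsineDensity A B y :=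
  rpow_nonneg (mul_nonneg (sub_nonneg.2 hB) (sub_nonneg.2 hA)) _

theorem hasDerivAt_arcsin_rescale {A B y : ℝ} (hA : A < y) (hB : y < B) :
    HasDerivAt (fun z => arcsin ((2 * z - A - B) / (B - A))) (arcsineDensity A B y) y := by
  have hAB : 0 < B - A := by linarith
  have hP : 0 < (B - y) * (y - A) := mul_pos (by linarith) (by linarith)
  have hlin : HasDerivAt (fun z => (2 * z - A - B) / (B - A)) (2 * 1 / (B - A)) y :=
    ((((hasDerivAt_id y).const_mul 2).sub_const _).sub_const _).div_const _
  have hne_neg_one : (2 * y - A - B) / (B - A) ≠ -1 := fun h => by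
    rw [div_eq_iff hAB.ne'] at h; linarith
  have hne_one : (2 * y - A - B) / (B - A) ≠ 1 := fun h => by
    rw [div_eq_iff hAB.ne'] at h; linarith
  have hsq : 1 - ((2 * y - A - B) / (B - A)) ^ 2 = (2 / (B - A)) ^ 2 * ((B - y) * (y - A)) := by
    field_simp; ring
  refine ((hasDerivAt_arcsin hne_neg_one hne_one).comp y hlin).congr_deriv ?_
  rw [arcsineDensity, hsq, sqrt_mul (sq_nonneg _), sqrt_sq (by positivity), rpow_neg hP.le,
    ← sqrt_eq_rpow]
  have := sqrt_pos.2 hP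
  field_simp

theorem nonneg_of_hasDerivAt_of_monotoneOn {f : ℝ → ℝ} {f' x : ℝ} {s : Set ℝ}
    (hf' : HasDerivAt f f' x) (hs : s ∈ nhds x) (hf : MonotoneOn f s) : 0 ≤ f' :=
  hf'.hasDerivWithinAt.nonneg_of_monotoneOn
    (uniqueDiffWithinAt_iff_accPt.1 (uniqueDiffWithinAt_of_mem_nhds hs)) hf

variable {f f' : ℝ → ℝ} {a b : ℝ}

theorem integrableOn_deriv_mul_sub_rpow (hfc : ContinuousOn f (Icc a b))
    (hf : StrictMonoOn f (Icc a b)) (hf' : ∀ x ∈ Ioo a b, HasDerivAt f (f' x) x) :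
    IntegrableOn (fun x => f' x * (f b - f x) ^ (-(1 / 2) : ℝ)) (Ioo a b) := by
  have hlt (x) (hx : x ∈ Ioo a b) : 0 < f b - f x :=
    sub_pos.2 (hf (Ioo_subset_Icc_self hx) (right_mem_Icc.2 (hx.1.trans hx.2).le) hx.2)
  refine (integrableOn_deriv_of_nonneg (g := fun x => -2 * √(f b - f x)) (by fun_prop)
    (fun x hx => ?_) fun x hx => mul_nonneg (nonneg_of_hasDerivAt_of_monotoneOn (hf' x hx)
      (Icc_mem_nhds hx.1 hx.2) hf.monotoneOn)
      (rpow_nonneg (hlt x hx).le _)).mono_set Ioo_subset_Ioc_self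
  refine ((((hf' x hx).const_sub (f b)).sqrt (hlt x hx).ne').const_mul (-2)).congr_deriv ?_
  rw [rpow_neg (hlt x hx).le, ← sqrt_eq_rpow]
  have := sqrt_pos.2 (hlt x hx)
  field_simp

theorem continuousOn_arcsin_rescale (hfc : ContinuousOn f (Icc a b)) :
    ContinuousOn (fun x => arcsin ((2 * f x - f a - f b) / (f b - f a))) (Icc a b) :=
  continuous_arcsin.comp_continuousOn (by fun_prop)

theorem hasDerivAt_arcsin_rescale_comp (hf : StrictMonoOn f (Icc a b))
    (hf' : ∀ x ∈ Ioo a b, HasDerivAt f (f' x) x) {x : ℝ} (hx : x ∈ Ioo a b) :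
    HasDerivAt (fun x => arcsin ((2 * f x - f a - f b) / (f b - f a)))
      (f' x * arcsineDensity (f a) (f b) (f x)) x := by
  have hab := hx.1.trans hx.2
  have hx' := Ioo_subset_Icc_self hx
  rw [mul_comm]
  exact (hasDerivAt_arcsin_rescale (hf (left_mem_Icc.2 hab.le) hx' hx.1)
    (hf hx' (right_mem_Icc.2 hab.le) hx.2)).comp x (hf' x hx)

theorem integrableOn_deriv_mul_arcsineDensity (hfc : ContinuousOn f (Icc a b))
    (hf : StrictMonoOn f (Icc a b)) (hf' : ∀ x ∈ Ioo a b, HasDerivAt f (f' x) x) :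
    IntegrableOn (fun x => f' x * arcsineDensity (f a) (f b) (f x)) (Ioo a b) := by
  refine (integrableOn_deriv_of_nonneg (continuousOn_arcsin_rescale hfc)
    (fun x hx => hasDerivAt_arcsin_rescale_comp hf hf' hx)
    fun x hx => mul_nonneg (nonneg_of_hasDerivAt_of_monotoneOn (hf' x hx)
      (Icc_mem_nhds hx.1 hx.2) hf.monotoneOn) ?_).mono_set Ioo_subset_Ioc_self
  have hab := (hx.1.trans hx.2).le
  exact arcsineDensity_nonneg
    (hf.monotoneOn (left_mem_Icc.2 hab) (Ioo_subset_Icc_self hx) hx.1.le)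
    (hf.monotoneOn (Ioo_subset_Icc_self hx) (right_mem_Icc.2 hab) hx.2.le)

theorem integral_deriv_mul_arcsineDensity (hab : a < b) (hfc : ContinuousOn f (Icc a b))
    (hf : StrictMonoOn f (Icc a b)) (hf' : ∀ x ∈ Ioo a b, HasDerivAt f (f' x) x) :
    ∫ x in Ioo a b, f' x * arcsineDensity (f a) (f b) (f x) = π := by
  have hne : f b - f a ≠ 0 :=
    (sub_pos.2 (hf (left_mem_Icc.2 hab.le) (right_mem_Icc.2 hab.le) hab)).ne'
  have hright : (2 * f b - f a - f b) / (f b - f a) = 1 := by field_simp; ring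
  have hleft : (2 * f a - f a - f b) / (f b - f a) = -1 := by field_simp; ring
  rw [← integral_Ioc_eq_integral_Ioo, ← intervalIntegral.integral_of_le hab.le,
    integral_eq_sub_of_hasDerivAt_of_le hab.le (continuousOn_arcsin_rescale hfc)
      (fun x hx => hasDerivAt_arcsin_rescale_comp hf hf' hx)
      ((intervalIntegrable_iff_integrableOn_Ioo_of_le hab.le).2
        (integrableOn_deriv_mul_arcsineDensity hfc hf hf')),
    hright, hleft, arcsin_one, arcsin_neg_one]
  ring

end Arcsine

section Cosh

theorem cosh_lt_cosh_of_abs_lt {x y : ℝ} (h : |x| < y) : cosh x < cosh y :=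
  cosh_lt_cosh.2 (h.trans_le (le_abs_self y))

theorem strictMonoOn_cosh_Icc {a b : ℝ} (ha : 0 ≤ a) : StrictMonoOn cosh (Icc a b) :=
  cosh_strictMonoOn.mono fun _ hx => ha.trans hx.1

theorem integrableOn_sinh_mul_cosh_sub_rpow (t : ℝ) :
    IntegrableOn (fun s => sinh s * (cosh t - cosh s) ^ (-(1 / 2) : ℝ)) (Ioo 0 t) :=
  integrableOn_deriv_mul_sub_rpow continuous_cosh.continuousOn (strictMonoOn_cosh_Icc le_rfl)
    fun s _ => hasDerivAt_cosh s

theorem integrableOn_sinh_mul_arcsineDensity (a b : ℝ) :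
    IntegrableOn (fun x => sinh x * arcsineDensity (cosh a) (cosh b) (cosh x)) (Ioo |a| b) := by
  rw [← cosh_abs a]
  exact integrableOn_deriv_mul_arcsineDensity continuous_cosh.continuousOn
    (strictMonoOn_cosh_Icc (abs_nonneg a)) fun x _ => hasDerivAt_cosh x

theorem integral_sinh_mul_arcsineDensity {a b : ℝ} (h : |a| < b) :
    ∫ x in Ioo |a| b, sinh x * arcsineDensity (cosh a) (cosh b) (cosh x) = π := by
  rw [← cosh_abs a]
  exact integral_deriv_mul_arcsineDensity h continuous_cosh.continuousOn
    (strictMonoOn_cosh_Icc (abs_nonneg a)) fun x _ => hasDerivAt_cosh x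

theorem cosh_add_sub_mul_sub_cosh_sub_comm (r s l : ℝ) :
    (cosh (r + s) - cosh l) * (cosh l - cosh (r - s)) =
      (cosh (r + l) - cosh s) * (cosh s - cosh (r - l)) := by
  simp only [cosh_add, cosh_sub]
  linear_combination (sinh l ^ 2 - sinh s ^ 2) * cosh_sq r
    + (1 - cosh r ^ 2) * cosh_sq s + (cosh r ^ 2 - 1) * cosh_sq l

end Cosh

section Region

/-- The region of integration of `Isol t r`: the pairs `(s, l)` with `s < t` such that `r`, `s`, `l`
are the side lengths of a nondegenerate triangle. The inequality `0 < s` is implied. -/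
def waveRegion (t r : ℝ) : Set (ℝ × ℝ) :=
  regionBetween (fun s => |r - s|) (fun s => r + s) (Iio t)

theorem measurableSet_waveRegion (t r : ℝ) : MeasurableSet (waveRegion t r) :=
  measurableSet_regionBetween (by fun_prop) (by fun_prop) measurableSet_Iio

theorem mem_waveRegion_iff_swap {t r s l : ℝ} :
    (s, l) ∈ waveRegion t r ↔ s < t ∧ |r - l| < s ∧ s < r + l := by
  simp only [waveRegion, regionBetween, mem_ofPred_eq, mem_Iio, mem_Ioo, abs_lt]
  constructor <;> rintro ⟨hst, ⟨h₁, h₂⟩, h₃⟩ <;> refine ⟨hst, ⟨?_, ?_⟩, ?_⟩ <;> linarith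

theorem pos_fst_of_mem_waveRegion {t r s l : ℝ} (h : (s, l) ∈ waveRegion t r) : 0 < s :=
  (abs_nonneg _).trans_lt (mem_waveRegion_iff_swap.1 h).2.1

theorem pos_snd_of_mem_waveRegion {t r s l : ℝ} (h : (s, l) ∈ waveRegion t r) : 0 < l :=
  (abs_nonneg _).trans_lt h.2.1

theorem prodMk_preimage_waveRegion {t s : ℝ} (hst : s < t) (r : ℝ) :
    Prod.mk s ⁻¹' waveRegion t r = Ioo |r - s| (r + s) :=
  Set.ext fun _ => and_iff_right hst

theorem prodMk_preimage_waveRegion_eq_empty {t s : ℝ} (hs : s ∉ Ioo 0 t) (r : ℝ) :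
    Prod.mk s ⁻¹' waveRegion t r = ∅ :=
  eq_empty_of_forall_notMem fun _ hl => hs ⟨pos_fst_of_mem_waveRegion hl, hl.1⟩

theorem prodMk_right_preimage_waveRegion {t r l : ℝ} (hl : |r - t| < l) :
    (·, l) ⁻¹' waveRegion t r = Ioo |r - l| t := by
  ext s
  have htl : t < r + l := by linarith [(abs_lt.1 hl).1]
  rw [mem_preimage, mem_waveRegion_iff_swap]
  exact ⟨fun h => ⟨h.2.1, h.1⟩, fun h => ⟨h.2, h.1, h.2.trans htl⟩⟩

end Region

section Kernel

/-- The kernel against which `φ` is integrated in `Isol t r φ`. -/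
noncomputable def waveKernel (t r s l : ℝ) : ℝ :=
  sinh l * sinh s * ((cosh t - cosh s) * (cosh (r + s) - cosh l) *
    (cosh l - cosh (r - s))) ^ (-(1 / 2) : ℝ)

variable {t r s l : ℝ}

theorem waveKernel_eq_mul_arcsineDensity (h : (s, l) ∈ waveRegion t r) :
    waveKernel t r s l = sinh s * (cosh t - cosh s) ^ (-(1 / 2) : ℝ) *
      (sinh l * arcsineDensity (cosh (r - s)) (cosh (r + s)) (cosh l)) := by
  have hs : |s| < t := (abs_of_pos (pos_fst_of_mem_waveRegion h)).trans_lt h.1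
  have hl : |l| < r + s := (abs_of_pos (pos_snd_of_mem_waveRegion h)).trans_lt h.2.2
  have hts := sub_nonneg.2 (cosh_lt_cosh_of_abs_lt hs).le
  have hrs := mul_nonneg (sub_nonneg.2 (cosh_lt_cosh_of_abs_lt hl).le)
    (sub_nonneg.2 (cosh_lt_cosh_of_abs_lt h.2.1).le)
  rw [waveKernel, arcsineDensity, mul_assoc (cosh t - cosh s), mul_rpow hts hrs]
  ring

theorem waveKernel_eq_mul_arcsineDensity_swap (h : (s, l) ∈ waveRegion t r) :
    waveKernel t r s l = sinh l * (cosh (r + l) - cosh s) ^ (-(1 / 2) : ℝ) *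
      (sinh s * arcsineDensity (cosh (r - l)) (cosh t) (cosh s)) := by
  obtain ⟨hst, hrl, hsrl⟩ := mem_waveRegion_iff_swap.1 h
  have hs : |s| = s := abs_of_pos (pos_fst_of_mem_waveRegion h)
  have hrls := sub_nonneg.2 (cosh_lt_cosh_of_abs_lt (hs.trans_lt hsrl)).le
  have hts := mul_nonneg (sub_nonneg.2 (cosh_lt_cosh_of_abs_lt (hs.trans_lt hst)).le)
    (sub_nonneg.2 (cosh_lt_cosh_of_abs_lt hrl).le)
  rw [waveKernel, arcsineDensity, mul_assoc (cosh t - cosh s), cosh_add_sub_mul_sub_cosh_sub_comm,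
    mul_left_comm, mul_rpow hrls hts]
  ring

theorem waveKernel_nonneg (h : (s, l) ∈ waveRegion t r) : 0 ≤ waveKernel t r s l := by
  have hs := pos_fst_of_mem_waveRegion h
  have hl := pos_snd_of_mem_waveRegion h
  have hst := cosh_lt_cosh_of_abs_lt ((abs_of_pos hs).trans_lt h.1)
  rw [waveKernel_eq_mul_arcsineDensity h]
  exact mul_nonneg (mul_nonneg (sinh_nonneg_iff.2 hs.le) (rpow_nonneg (sub_nonneg.2 hst.le) _))
    (mul_nonneg (sinh_nonneg_iff.2 hl.le) (arcsineDensity_nonneg (cosh_lt_cosh_of_abs_lt h.2.1).le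
      (cosh_lt_cosh_of_abs_lt ((abs_of_pos hl).trans_lt h.2.2)).le))

theorem measurable_waveKernel (t r : ℝ) :
    Measurable fun p : ℝ × ℝ => waveKernel t r p.1 p.2 := by
  unfold waveKernel
  exact Measurable.mul (by fun_prop) (Measurable.pow_const (by fun_prop) _)

theorem eqOn_waveKernel_snd (hst : s < t) :
    EqOn (waveKernel t r s) (fun l => sinh s * (cosh t - cosh s) ^ (-(1 / 2) : ℝ) *
      (sinh l * arcsineDensity (cosh (r - s)) (cosh (r + s)) (cosh l))) (Ioo |r - s| (r + s)) :=
  fun _ hl => waveKernel_eq_mul_arcsineDensity ⟨hst, hl⟩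

theorem integrableOn_waveKernel_snd (hst : s < t) :
    IntegrableOn (waveKernel t r s) (Ioo |r - s| (r + s)) :=
  (integrableOn_congr_fun (eqOn_waveKernel_snd hst) measurableSet_Ioo).2
    ((integrableOn_sinh_mul_arcsineDensity (r - s) (r + s)).const_mul _)

theorem integral_waveKernel_snd (hr : 0 < r) (hs : s ∈ Ioo 0 t) :
    ∫ l in Ioo |r - s| (r + s), waveKernel t r s l =
      sinh s * (cosh t - cosh s) ^ (-(1 / 2) : ℝ) * π := by
  have hlt : |r - s| < r + s := abs_lt.2 ⟨by linarith, by linarith [hs.1]⟩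
  rw [setIntegral_congr_fun measurableSet_Ioo (eqOn_waveKernel_snd hs.2),
    MeasureTheory.integral_const_mul, integral_sinh_mul_arcsineDensity hlt]

theorem integrableOn_waveKernel (t : ℝ) (hr : 0 < r) :
    IntegrableOn (fun p : ℝ × ℝ => waveKernel t r p.1 p.2) (waveRegion t r) := by
  have hS := measurableSet_waveRegion t r
  refine (integrableOn_prod_iff_slices hS (measurable_waveKernel t r).aestronglyMeasurable).2
    ⟨.of_forall fun s => ?_, ?_⟩
  · by_cases hs : s ∈ Ioo 0 t
    · rw [prodMk_preimage_waveRegion hs.2]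
      exact integrableOn_waveKernel_snd hs.2
    · rw [prodMk_preimage_waveRegion_eq_empty hs]
      exact integrableOn_empty
  · have hslice : (fun s => ∫ l in Prod.mk s ⁻¹' waveRegion t r, ‖waveKernel t r s l‖) =
        (Ioo 0 t).indicator fun s => sinh s * (cosh t - cosh s) ^ (-(1 / 2) : ℝ) * π := by
      ext s
      by_cases hs : s ∈ Ioo 0 t
      · rw [indicator_of_mem hs, ← integral_waveKernel_snd hr hs,
          ← prodMk_preimage_waveRegion hs.2 r]
        exact setIntegral_congr_fun (measurable_prodMk_left hS)
          fun l hl => norm_of_nonneg (waveKernel_nonneg hl)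
      · rw [indicator_of_notMem hs, prodMk_preimage_waveRegion_eq_empty hs, setIntegral_empty]
    rw [hslice, integrable_indicator_iff measurableSet_Ioo]
    exact (integrableOn_sinh_mul_cosh_sub_rpow t).mul_const π

theorem integrableOn_waveKernel_fst (hl : |r - t| < l) :
    IntegrableOn (fun s => waveKernel t r s l) (Ioo |r - l| t) := by
  have hcont : ContinuousOn (fun s => sinh l * (cosh (r + l) - cosh s) ^ (-(1 / 2) : ℝ))
      (Icc |r - l| t) := by
    refine continuousOn_const.mul (ContinuousOn.rpow_const (by fun_prop) fun s hs => .inl ?_)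
    have hs₀ : |s| = s := abs_of_nonneg ((abs_nonneg _).trans hs.1)
    have hlt : s < r + l := by linarith [(abs_lt.1 hl).1, hs.2]
    exact (sub_pos.2 (cosh_lt_cosh_of_abs_lt (hs₀.trans_lt hlt))).ne'
  refine ((integrableOn_sinh_mul_arcsineDensity (r - l) t).continuousOn_mul_of_subset hcont
    isCompact_Icc measurableSet_Ioo Ioo_subset_Icc_self).congr_fun (fun s hs => ?_)
    measurableSet_Ioo
  rw [← prodMk_right_preimage_waveRegion hl] at hs
  exact (waveKernel_eq_mul_arcsineDensity_swap hs).symm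

theorem mul_arcsineDensity_le_waveKernel (h : (s, l) ∈ waveRegion t r) :
    sinh l * cosh (r + l) ^ (-(1 / 2) : ℝ) *
      (sinh s * arcsineDensity (cosh (r - l)) (cosh t) (cosh s)) ≤ waveKernel t r s l := by
  obtain ⟨hst, hrl, hsrl⟩ := mem_waveRegion_iff_swap.1 h
  have hs := pos_fst_of_mem_waveRegion h
  have hpos := sub_pos.2 (cosh_lt_cosh_of_abs_lt ((abs_of_pos hs).trans_lt hsrl))
  have hrpow : cosh (r + l) ^ (-(1 / 2) : ℝ) ≤ (cosh (r + l) - cosh s) ^ (-(1 / 2) : ℝ) :=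
    rpow_le_rpow_of_nonpos hpos (sub_le_self _ (cosh_pos s).le) (by norm_num)
  rw [waveKernel_eq_mul_arcsineDensity_swap h]
  refine mul_le_mul_of_nonneg_right (mul_le_mul_of_nonneg_left hrpow ?_) (mul_nonneg ?_ ?_)
  · exact sinh_nonneg_iff.2 (pos_snd_of_mem_waveRegion h).le
  · exact sinh_nonneg_iff.2 hs.le
  · exact arcsineDensity_nonneg (cosh_lt_cosh_of_abs_lt hrl).le
      (cosh_lt_cosh_of_abs_lt ((abs_of_pos hs).trans_lt hst)).le

theorem le_integral_waveKernel_fst (hl : l ∈ Ioo |r - t| (r + t)) :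
    sinh l * cosh (r + l) ^ (-(1 / 2) : ℝ) * π ≤
      ∫ s in (·, l) ⁻¹' waveRegion t r, waveKernel t r s l := by
  have hlt : |r - l| < t := abs_lt.2 ⟨by linarith [hl.2], by linarith [(abs_lt.1 hl.1).2]⟩
  rw [prodMk_right_preimage_waveRegion hl.1, ← integral_sinh_mul_arcsineDensity hlt,
    ← MeasureTheory.integral_const_mul]
  refine setIntegral_mono_on ((integrableOn_sinh_mul_arcsineDensity _ _).const_mul _)
    (integrableOn_waveKernel_fst hl.1) measurableSet_Ioo fun s hs => ?_
  rw [← prodMk_right_preimage_waveRegion hl.1] at hs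
  exact mul_arcsineDensity_le_waveKernel hs

end Kernel

section Solution

variable {φ : ℝ → ℝ} {t r : ℝ}

theorem snd_mem_Ioo_of_mem_waveRegion {p : ℝ × ℝ} (h : p ∈ waveRegion t r) :
    p.2 ∈ Ioo 0 (r + t) :=
  ⟨pos_snd_of_mem_waveRegion h, h.2.2.trans (add_lt_add_right h.1 r)⟩

theorem integrableOn_mul_waveKernel (hr : 0 < r)
    (hφm : AEStronglyMeasurable φ (volume.restrict (Ioo 0 (r + t))))
    (hφb : Bornology.IsBounded (φ '' Ioo 0 (r + t))) :
    IntegrableOn (fun p : ℝ × ℝ => φ p.2 * waveKernel t r p.1 p.2) (waveRegion t r) := by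
  obtain ⟨M, hM⟩ := hφb.exists_norm_le
  have hS := measurableSet_waveRegion t r
  have hmeas : AEStronglyMeasurable (fun p : ℝ × ℝ => φ p.2)
      (volume.restrict (univ ×ˢ Ioo 0 (r + t))) := by
    rw [Measure.volume_eq_prod, ← Measure.prod_restrict]
    exact hφm.comp_snd
  refine (integrableOn_waveKernel t hr).bdd_mul (c := M)
    (hmeas.mono_set fun p hp => mem_prod.2 ⟨mem_univ _, snd_mem_Ioo_of_mem_waveRegion hp⟩) ?_
  exact ae_restrict_of_forall_mem hS fun p hp =>
    hM _ (mem_image_of_mem φ (snd_mem_Ioo_of_mem_waveRegion hp))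

theorem Isol_eq_integral_slices (φ : ℝ → ℝ) (ht : 0 ≤ t) (hr : 0 < r) :
    Isol t r φ = 1 / (π * √2) *
      ∫ s, ∫ l in Prod.mk s ⁻¹' waveRegion t r, φ l * waveKernel t r s l := by
  rw [Isol, intervalIntegral.integral_of_le ht, integral_Ioc_eq_integral_Ioo,
    ← MeasureTheory.integral_indicator measurableSet_Ioo]
  congr 2 with s
  by_cases hs : s ∈ Ioo 0 t
  · have hlt : |r - s| < r + s := abs_lt.2 ⟨by linarith, by linarith [hs.1]⟩
    rw [indicator_of_mem hs, prodMk_preimage_waveRegion hs.2, ← integral_Ioc_eq_integral_Ioo,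
      ← intervalIntegral.integral_of_le hlt.le]
    simp only [waveKernel, mul_assoc]
  · rw [indicator_of_notMem hs, prodMk_preimage_waveRegion_eq_empty hs, setIntegral_empty]

theorem Isol_eq_integral_slices_symm (ht : 0 ≤ t) (hr : 0 < r)
    (hφ : IntegrableOn (fun p : ℝ × ℝ => φ p.2 * waveKernel t r p.1 p.2) (waveRegion t r)) :
    Isol t r φ = 1 / (π * √2) *
      ∫ l, ∫ s in (·, l) ⁻¹' waveRegion t r, φ l * waveKernel t r s l := by
  have hS := measurableSet_waveRegion t r
  rw [Isol_eq_integral_slices φ ht hr, ← setIntegral_prod_eq_integral_slices hS hφ,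
    setIntegral_prod_eq_integral_slices_symm hS hφ]

theorem integral_le_integral_slices_waveKernel (hφnn : ∀ x ∈ Ioo 0 (r + t), 0 ≤ φ x)
    (hφ : IntegrableOn (fun p : ℝ × ℝ => φ p.2 * waveKernel t r p.1 p.2) (waveRegion t r)) :
    ∫ l in Ioo |r - t| (r + t), φ l * (sinh l * cosh (r + l) ^ (-(1 / 2) : ℝ) * π) ≤
      ∫ l, ∫ s in (·, l) ⁻¹' waveRegion t r, φ l * waveKernel t r s l := by
  have hS := measurableSet_waveRegion t r
  have hint := integrable_integral_slices_symm hS hφ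
  have hnonneg (l : ℝ) : 0 ≤ ∫ s in (·, l) ⁻¹' waveRegion t r, φ l * waveKernel t r s l :=
    setIntegral_nonneg (measurable_prodMk_right hS) fun s hs =>
      mul_nonneg (hφnn l (snd_mem_Ioo_of_mem_waveRegion hs)) (waveKernel_nonneg hs)
  have hmem {l : ℝ} (hl : l ∈ Ioo |r - t| (r + t)) : l ∈ Ioo 0 (r + t) :=
    ⟨(abs_nonneg _).trans_lt hl.1, hl.2⟩
  calc ∫ l in Ioo |r - t| (r + t), φ l * (sinh l * cosh (r + l) ^ (-(1 / 2) : ℝ) * π)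
      ≤ ∫ l in Ioo |r - t| (r + t),
          ∫ s in (·, l) ⁻¹' waveRegion t r, φ l * waveKernel t r s l := by
        refine integral_mono_of_nonneg ?_ hint.integrableOn ?_
        · refine ae_restrict_of_forall_mem measurableSet_Ioo fun l hl => ?_
          have := sinh_nonneg_iff.2 (hmem hl).1.le
          have := cosh_pos (r + l)
          have := hφnn l (hmem hl)
          positivity
        · refine ae_restrict_of_forall_mem measurableSet_Ioo fun l hl => ?_
          simp only [MeasureTheory.integral_const_mul]
          exact mul_le_mul_of_nonneg_left (le_integral_waveKernel_fst hl) (hφnn l (hmem hl))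
    _ ≤ ∫ l, ∫ s in (·, l) ⁻¹' waveRegion t r, φ l * waveKernel t r s l :=
        setIntegral_le_integral hint (.of_forall hnonneg)

theorem two_mul_rpow_neg_half {x : ℝ} (hx : 0 ≤ x) :
    (2 * x) ^ (-(1 / 2) : ℝ) = 1 / (π * √2) * (x ^ (-(1 / 2) : ℝ) * π) := by
  rw [mul_rpow zero_le_two hx, rpow_neg zero_le_two, ← sqrt_eq_rpow]
  field_simp

end Solution

theorem linear_solution_lower_bound_general (φ : ℝ → ℝ) (t r : ℝ) (ht : 0 < t) (hr : 0 < r)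
    (hφm : AEStronglyMeasurable φ (volume.restrict (Ioo 0 (r + t))))
    (hφb : Bornology.IsBounded (φ '' Ioo 0 (r + t)))
    (hφnn : ∀ x ∈ Ioo 0 (r + t), 0 ≤ φ x) :
    Isol t r φ ≥
      ∫ l in |r - t|..(r + t), φ l * sinh l * (2 * cosh (r + l)) ^ (-(1 / 2) : ℝ) := by
  have hφ := integrableOn_mul_waveKernel hr hφm hφb
  have hlt : |r - t| < r + t := abs_lt.2 ⟨by linarith, by linarith⟩
  have hconst (l : ℝ) : φ l * sinh l * (2 * cosh (r + l)) ^ (-(1 / 2) : ℝ) =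
      1 / (π * √2) * (φ l * (sinh l * cosh (r + l) ^ (-(1 / 2) : ℝ) * π)) := by
    rw [two_mul_rpow_neg_half (cosh_pos _).le]
    ring
  rw [Isol_eq_integral_slices_symm ht.le hr hφ, intervalIntegral.integral_of_le hlt.le,
    integral_Ioc_eq_integral_Ioo]
  simp only [hconst]
  rw [MeasureTheory.integral_const_mul]
  exact mul_le_mul_of_nonneg_left (integral_le_integral_slices_waveKernel hφnn hφ)
    (by positivity)

theorem linear_solution_lower_bound (φ : ℝ → ℝ)
    (hφc : ContinuousOn φ (Set.Ici 0))
    (hφnn : ∀ x ∈ Set.Ici (0 : ℝ), 0 ≤ φ x)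
    (t r : ℝ) (ht : 0 < t) (hr : 0 < r) :
    Isol t r φ ≥
      ∫ l in |r - t|..(r + t),
        φ l * Real.sinh l * (2 * Real.cosh (r + l)) ^ (-(1 / 2) : ℝ) := by
  have hφIcc : ContinuousOn φ (Icc 0 (r + t)) := hφc.mono Icc_subset_Ici_self
  exact linear_solution_lower_bound_general φ t r ht hr
    ((hφIcc.mono Ioo_subset_Icc_self).aestronglyMeasurable measurableSet_Ioo)
    ((isCompact_Icc.image_of_continuousOn hφIcc).isBounded.subset (image_mono Ioo_subset_Icc_self))
    fun x hx => hφnn x hx.1.le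
end
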